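/- arXiv:2509.18931 — 3 statements merged into one kernel-verified Lean document; each statement's English description precedes it below -/
import Mathlib

section
/- For every x ∈ ℕ, the limiting probability mass function admits the explicit expression ∫₀^∞ ∫₀^∞ ((z·z')^x / x!) · e^{−z·z'} · e^{−z} · e^{−z'} dz dz' = Σ_{k=0}^{x} C(x,k) · (δ − Σ_{r=0}^{k−1} (−1)^r · r!) / k!, where δ is the Gompertz constant. In particular the value at x = 0 equals δ. -/
open MeasureTheory

/-- The Gompertz constant `δ = ∫₀^∞ e^{-z} / (1+z) dz`. -/
noncomputable def gompertz : ℝ :=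
  ∫ z in Set.Ioi (0:ℝ), Real.exp (-z) / (1 + z)

lemma gz_int (k : ℕ) : IntegrableOn (fun z : ℝ => Real.exp (-z) / (1 + z) ^ (k+1)) (Set.Ioi 0) := by
  have h0 : IntegrableOn (fun z : ℝ => Real.exp (-z)) (Set.Ioi 0) := by
    simpa using exp_neg_integrableOn_Ioi 0 one_pos
  refine Integrable.mono' h0 ?_ ?_
  · refine ContinuousOn.aestronglyMeasurable ?_ measurableSet_Ioi
    refine ContinuousOn.div (by fun_prop) (by fun_prop) ?_
    intro z hz
    have : (0:ℝ) < z := hz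
    positivity
  · refine (ae_restrict_iff' measurableSet_Ioi).2 (Filter.Eventually.of_forall ?_)
    intro z hz
    have : (0:ℝ) < z := hz
    rw [Real.norm_of_nonneg (by positivity)]
    exact div_le_self (Real.exp_pos _).le (one_le_pow₀ (by linarith))

lemma gz_rec (k : ℕ) : (∫ z in Set.Ioi (0:ℝ), Real.exp (-z) / (1 + z) ^ (k+1))
    + (k+1) * (∫ z in Set.Ioi (0:ℝ), Real.exp (-z) / (1 + z) ^ (k+1+1)) = 1 := by
  rw [← integral_const_mul, ← integral_add (gz_int k) ((gz_int (k+1)).const_mul _)]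
  have h := integral_Ioi_of_hasDerivAt_of_tendsto (a := (0:ℝ)) (m := 0)
    (f := fun z : ℝ => -(Real.exp (-z) / (1 + z) ^ (k+1)))
    (f' := fun z : ℝ => Real.exp (-z) / (1 + z) ^ (k+1)
      + (k+1) * (Real.exp (-z) / (1 + z) ^ (k+1+1))) ?_ ?_ ?_ ?_
  · rw [h]; simp
  · refine ContinuousAt.continuousWithinAt ?_
    refine ContinuousAt.neg (ContinuousAt.div (by fun_prop) (by fun_prop) (by simp))
  · intro z hz
    have hz : (0:ℝ) < z := hz
    have h1 : HasDerivAt (fun z : ℝ => Real.exp (-z)) (Real.exp (-z) * (-1)) z :=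
      (hasDerivAt_neg z).exp
    have h2 : HasDerivAt (fun z : ℝ => (1 + z) ^ (k+1)) (((k+1 : ℕ) : ℝ) * (1+z)^k * 1) z := by
      exact ((hasDerivAt_id z).const_add 1).pow (k+1)
    have h3 := (h1.div h2 (by positivity)).neg
    refine h3.congr_deriv ?_
    have : (1 + z) ≠ 0 := by positivity
    push_cast
    field_simp
    ring
  · exact (gz_int k).add ((gz_int (k+1)).const_mul _)
  · have h0 : Filter.Tendsto (fun z : ℝ => Real.exp (-z)) Filter.atTop (nhds 0) :=
      Real.tendsto_exp_neg_atTop_nhds_zero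
    rw [← neg_zero]
    refine Filter.Tendsto.neg ?_
    refine squeeze_zero' ?_ ?_ h0
    · filter_upwards [Filter.eventually_gt_atTop 0] with z hz
      positivity
    · filter_upwards [Filter.eventually_gt_atTop 0] with z hz
      exact div_le_self (Real.exp_pos _).le (one_le_pow₀ (by linarith))

lemma gz_closed (k : ℕ) : (-1)^k * (∫ z in Set.Ioi (0:ℝ), Real.exp (-z) / (1 + z) ^ (k+1))
    = (gompertz - ∑ r ∈ Finset.range k, (-1 : ℝ) ^ r * (r.factorial : ℝ))
              / (k.factorial : ℝ) := by
  induction k with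
  | zero => simp [gompertz]
  | succ k ih =>
    have h := gz_rec k
    rw [Finset.sum_range_succ, Nat.factorial_succ]
    have hk : (k.factorial : ℝ) ≠ 0 := by positivity
    have hk1 : (k : ℝ) + 1 ≠ 0 := by positivity
    rw [eq_div_iff hk] at ih
    push_cast
    rw [eq_div_iff (by positivity), ← sub_sub, ← ih, pow_succ]
    linear_combination (-(-1)^k * (k.factorial : ℝ)) * h

lemma gz_inner (x : ℕ) (z : ℝ) (hz : 0 < z) :
    (∫ z' in Set.Ioi (0:ℝ), ((z * z') ^ x / (x.factorial : ℝ)) * Real.exp (-(z * z'))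
            * Real.exp (-z) * Real.exp (-z'))
    = ∑ k ∈ Finset.range (x + 1), (x.choose k : ℝ) * ((-1)^k *
        (Real.exp (-z) / (1 + z) ^ (k+1))) := by
  have h := Real.integral_rpow_mul_exp_neg_mul_Ioi (a := (x:ℝ)+1) (r := 1 + z)
    (by positivity) (by positivity)
  have e : ∀ z' : ℝ, ((z * z') ^ x / (x.factorial : ℝ)) * Real.exp (-(z * z'))
            * Real.exp (-z) * Real.exp (-z')
      = (z^x / x.factorial * Real.exp (-z)) *
        (z' ^ ((x:ℝ) + 1 - 1) * Real.exp (-((1+z) * z'))) := by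
    intro z'
    rw [add_sub_cancel_right, Real.rpow_natCast, show -((1+z)*z') = -(z*z') + -z' by ring,
      Real.exp_add, mul_pow]
    ring
  simp_rw [e]
  rw [integral_const_mul, h, Real.Gamma_nat_eq_factorial]
  have h1 : (1 / (1 + z)) ^ ((x:ℝ) + 1) = (1 / (1+z))^(x+1) := by
    rw [← Real.rpow_natCast]; push_cast; rfl
  rw [h1]
  have hz1 : (1 + z) ≠ 0 := by positivity
  have hb : (z / (1+z))^x = ∑ k ∈ Finset.range (x + 1), (-1 / (1+z))^k * (x.choose k : ℝ) := by
    rw [show z / (1+z) = -1/(1+z) + 1 by field_simp; ring, add_pow]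
    simp
  have hx : (x.factorial : ℝ) ≠ 0 := by positivity
  trans (z / (1+z))^x * (Real.exp (-z) / (1+z))
  · rw [div_pow, div_pow, one_pow, pow_succ]
    field_simp
  · rw [hb, Finset.sum_mul]
    refine Finset.sum_congr rfl fun k _ => ?_
    rw [div_pow]
    field_simp
    ring

lemma gz_main (x : ℕ) :
      (∫ z in Set.Ioi (0:ℝ), ∫ z' in Set.Ioi (0:ℝ),
          ((z * z') ^ x / (x.factorial : ℝ)) * Real.exp (-(z * z'))
            * Real.exp (-z) * Real.exp (-z'))
        = ∑ k ∈ Finset.range (x + 1), (x.choose k : ℝ)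
            * ((gompertz - ∑ r ∈ Finset.range k, (-1 : ℝ) ^ r * (r.factorial : ℝ))
              / (k.factorial : ℝ)) := by
  rw [setIntegral_congr_fun measurableSet_Ioi (fun z hz => gz_inner x z hz),
    integral_finsetSum _ (fun k _ => ((gz_int k).const_mul _).const_mul _)]
  refine Finset.sum_congr rfl fun k _ => ?_
  rw [integral_const_mul, integral_const_mul, gz_closed]

/-- The limiting probability mass function: for every `x ∈ ℕ`,
`∫₀^∞∫₀^∞ ((zz')^x/x!) e^{-zz'} e^{-z} e^{-z'} dz dz'
  = Σ_{k=0}^x C(x,k) (δ - Σ_{r=0}^{k-1} (-1)^r r!) / k!`,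
and in particular the value at `x = 0` equals the Gompertz constant `δ`. -/
theorem limiting_pmf_gompertz :
    (∀ x : ℕ,
      (∫ z in Set.Ioi (0:ℝ), ∫ z' in Set.Ioi (0:ℝ),
          ((z * z') ^ x / (x.factorial : ℝ)) * Real.exp (-(z * z'))
            * Real.exp (-z) * Real.exp (-z'))
        = ∑ k ∈ Finset.range (x + 1), (x.choose k : ℝ)
            * ((gompertz - ∑ r ∈ Finset.range k, (-1 : ℝ) ^ r * (r.factorial : ℝ))
              / (k.factorial : ℝ))) ∧
    (∫ z in Set.Ioi (0:ℝ), ∫ z' in Set.Ioi (0:ℝ),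
        ((z * z') ^ 0 / ((0:ℕ).factorial : ℝ)) * Real.exp (-(z * z'))
          * Real.exp (-z) * Real.exp (-z'))
      = gompertz := by
  refine ⟨gz_main, ?_⟩
  rw [gz_main 0]
  simp
end

section
/- The second moment of the number of accessible direct paths converges to 5: lim_{n→∞} E[X_n²] = 5. -/
open MeasureTheory Filter

namespace RandomHypercube

/-- Index of a (potential) hypercube edge: the lower endpoint `A` together with the
direction `i` that is added, representing the edge from `A` to `A ∪ {i}`. -/
abbrev EdgeIdx (n : ℕ) := Finset (Fin n) × Fin n

/-- The sample space: an i.i.d. Uniform[0,1] weight for each edge index. -/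
abbrev CubeOmega (n : ℕ) := EdgeIdx n → ℝ

/-- The product of uniform measures on [0,1], one for each edge. -/
noncomputable def cubeMeasure (n : ℕ) : Measure (CubeOmega n) :=
  Measure.pi fun _ => (volume : Measure ℝ).restrict (Set.Icc 0 1)

/-- The vertex visited by the direct path associated to the permutation `σ`
just before taking its `j`-th step: the image under `σ` of `{0, …, j-1}`. -/
def initSeg (n : ℕ) (σ : Equiv.Perm (Fin n)) (j : Fin n) : Finset (Fin n) :=
  (Finset.univ.filter fun i => i < j).image σ

/-- The edge used in the `j`-th step of the direct path associated to `σ`. -/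
def pathEdge (n : ℕ) (σ : Equiv.Perm (Fin n)) (j : Fin n) : EdgeIdx n :=
  (initSeg n σ j, σ j)

/-- The direct path associated to `σ` is accessible if its successive edge
weights are strictly increasing. -/
def Accessible (n : ℕ) (σ : Equiv.Perm (Fin n)) (ω : CubeOmega n) : Prop :=
  StrictMono fun j : Fin n => ω (pathEdge n σ j)

/-- The number of accessible direct paths from `∅` to `[n]`. -/
noncomputable def X (n : ℕ) (ω : CubeOmega n) : ℕ :=
  Nat.card {σ : Equiv.Perm (Fin n) // Accessible n σ ω}

end RandomHypercube

namespace RandomHypercube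

def pat (n : ℕ) (σ τ : Equiv.Perm (Fin n)) : List Bool :=
  List.ofFn fun j : Fin n => decide (pathEdge n σ j = pathEdge n τ j)

def Shared {n : ℕ} (σ : Equiv.Perm (Fin n)) (j : Fin n) : Prop :=
  (∀ i, i < j → σ i < j) ∧ σ j = j

instance {n : ℕ} (σ : Equiv.Perm (Fin n)) (j : Fin n) : Decidable (Shared σ j) := by
  unfold Shared; infer_instance

lemma shared_iff {n : ℕ} (σ : Equiv.Perm (Fin n)) (j : Fin n) :
    pathEdge n 1 j = pathEdge n σ j ↔ Shared σ j := by
  unfold pathEdge Shared initSeg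
  rw [Prod.mk.injEq]
  constructor
  · rintro ⟨h1, h2⟩
    refine ⟨fun i hi => ?_, by simpa using h2.symm⟩
    have : σ i ∈ (Finset.univ.filter fun i => i < j).image σ :=
      Finset.mem_image_of_mem _ (by simpa using hi)
    rw [← h1] at this
    simpa using this
  · rintro ⟨h1, h2⟩
    refine ⟨?_, by simpa using h2.symm⟩
    symm
    apply Finset.eq_of_subset_of_card_le
    · intro x hx
      simp only [Finset.mem_image, Finset.mem_filter, Finset.mem_univ, true_and] at hx
      obtain ⟨i, hi, rfl⟩ := hx
      simpa using h1 i hi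
    · rw [Finset.card_image_of_injective _ σ.injective,
        Finset.card_image_of_injective _ (Equiv.injective (1 : Equiv.Perm (Fin n)))]

def pt {n : ℕ} (σ : Equiv.Perm (Fin n)) : List Bool :=
  List.ofFn fun j : Fin n => decide (Shared σ j)

lemma pat_eq {n : ℕ} (σ τ : Equiv.Perm (Fin n)) : pat n σ τ = pt (σ⁻¹ * τ) := by
  unfold pat pt
  congr 1
  funext j
  rw [decide_eq_decide, ← shared_iff]
  unfold pathEdge initSeg
  rw [Prod.mk.injEq, Prod.mk.injEq]
  have key : ∀ (ρ : Equiv.Perm (Fin n)) (S : Finset (Fin n)), S.image (σ⁻¹ * ρ) = (S.image ρ).image (σ⁻¹ : Equiv.Perm (Fin n)) := by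
    intro ρ S; rw [Finset.image_image]; rfl
  rw [key τ]
  have h1 : (Finset.univ.filter fun i => i < j).image (1 : Equiv.Perm (Fin n)) =
    ((Finset.univ.filter fun i => i < j).image σ).image (σ⁻¹ : Equiv.Perm (Fin n)) := by
    rw [← key]; simp
  rw [h1, (Finset.image_injective (Equiv.injective (σ⁻¹ : Equiv.Perm (Fin n)))).eq_iff]
  simp [Equiv.eq_symm_apply]

@[simp] lemma pt_length {n : ℕ} (σ : Equiv.Perm (Fin n)) : (pt σ).length = n := by simp [pt]

def blk {a b : ℕ} (p : Equiv.Perm (Fin a) × Equiv.Perm (Fin b)) : Equiv.Perm (Fin (a + b)) :=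
  finSumFinEquiv.permCongr (Equiv.Perm.sumCongrHom _ _ p)

lemma blk_castAdd {a b : ℕ} (p : Equiv.Perm (Fin a) × Equiv.Perm (Fin b)) (i : Fin a) :
    blk p (Fin.castAdd b i) = Fin.castAdd b (p.1 i) := by
  simp [blk, Equiv.permCongr_apply]

lemma blk_natAdd {a b : ℕ} (p : Equiv.Perm (Fin a) × Equiv.Perm (Fin b)) (i : Fin b) :
    blk p (Fin.natAdd a i) = Fin.natAdd a (p.2 i) := by
  simp [blk, Equiv.permCongr_apply]

lemma blk_inj {a b : ℕ} : Function.Injective (blk (a := a) (b := b)) := by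
  intro p q h
  exact Equiv.Perm.sumCongrHom_injective (finSumFinEquiv.permCongr.injective h)

lemma blk_surj {a b : ℕ} (σ : Equiv.Perm (Fin (a + b)))
    (h : ∀ i : Fin (a + b), (i : ℕ) < a → (σ i : ℕ) < a) : ∃ p, blk p = σ := by
  have := Equiv.Perm.mem_sumCongrHom_range_of_perm_mapsTo_inl
    (σ := finSumFinEquiv.symm.permCongr σ) (by
      rintro _ ⟨i, rfl⟩
      have hi := h (Fin.castAdd b i) (by simp)
      refine ⟨⟨_, hi⟩, ?_⟩
      rw [Equiv.permCongr_apply]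
      rw [Equiv.eq_symm_apply]
      ext
      simp)
  obtain ⟨p, hp⟩ := this
  refine ⟨p, ?_⟩
  unfold blk
  rw [hp]
  ext i; simp [Equiv.permCongr_apply]

lemma pt_blk {a b : ℕ} (p : Equiv.Perm (Fin a) × Equiv.Perm (Fin b)) :
    pt (blk p) = pt p.1 ++ pt p.2 := by
  unfold pt
  rw [List.ofFn_add]
  congr 2
  · funext j
    rw [decide_eq_decide]
    change Shared (blk p) (Fin.castAdd b j) ↔ _
    unfold Shared
    rw [blk_castAdd]
    constructor
    · rintro ⟨h1, h2⟩
      refine ⟨fun i hi => ?_, by simpa using h2⟩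
      have := h1 (Fin.castAdd b i) (by simp only [Fin.lt_def, Fin.val_castAdd, Fin.val_natAdd] at *; omega)
      rw [blk_castAdd] at this
      simp only [Fin.lt_def, Fin.val_castAdd, Fin.val_natAdd] at *; omega
    · rintro ⟨h1, h2⟩
      refine ⟨fun i => ?_, by simpa using h2⟩
      refine Fin.addCases (fun i hi => ?_) (fun i hi => ?_) i
      · rw [blk_castAdd]
        have := h1 i (by simp only [Fin.lt_def, Fin.val_castAdd, Fin.val_natAdd] at *; omega)
        simp only [Fin.lt_def, Fin.val_castAdd, Fin.val_natAdd] at *; omega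
      · simp only [Fin.lt_def, Fin.val_castAdd, Fin.val_natAdd] at *; omega
  · funext j
    rw [decide_eq_decide]
    unfold Shared
    rw [blk_natAdd]
    constructor
    · rintro ⟨h1, h2⟩
      refine ⟨fun i hi => ?_, by simpa using h2⟩
      have := h1 (Fin.natAdd a i) (by simp only [Fin.lt_def, Fin.val_castAdd, Fin.val_natAdd] at *; omega)
      rw [blk_natAdd] at this
      simp only [Fin.lt_def, Fin.val_castAdd, Fin.val_natAdd] at *; omega
    · rintro ⟨h1, h2⟩
      refine ⟨fun i => ?_, by simpa using h2⟩
      refine Fin.addCases (fun i hi => ?_) (fun i hi => ?_) i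
      · rw [blk_castAdd]
        simp only [Fin.lt_def, Fin.val_castAdd, Fin.val_natAdd] at *; omega
      · rw [blk_natAdd]
        have := h1 i (by simp only [Fin.lt_def, Fin.val_castAdd, Fin.val_natAdd] at *; omega)
        simp only [Fin.lt_def, Fin.val_castAdd, Fin.val_natAdd] at *; omega

lemma pt_one1 (α : Equiv.Perm (Fin 1)) : pt α = [true] := by
  have : α = 1 := Subsingleton.elim _ _
  subst this
  decide

/-- perms with no shared edge -/
def G (n : ℕ) : Finset (Equiv.Perm (Fin n)) := Finset.univ.filter fun σ => true ∉ pt σ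

def tri {j r : ℕ} (p : Equiv.Perm (Fin j) × Equiv.Perm (Fin r)) : Equiv.Perm (Fin (j + 1 + r)) :=
  blk (blk (p.1, 1), p.2)

lemma pt_tri {j r : ℕ} (p : Equiv.Perm (Fin j) × Equiv.Perm (Fin r)) :
    pt (tri p) = pt p.1 ++ true :: pt p.2 := by
  simp [tri, pt_blk, pt_one1]

lemma tri_inj {j r : ℕ} : Function.Injective (tri (j := j) (r := r)) := by
  intro p q h
  have := blk_inj h
  simp only [Prod.mk.injEq] at this
  have h2 := blk_inj this.1
  simp only [Prod.mk.injEq] at h2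
  exact Prod.ext h2.1 this.2

lemma tri_surj {j r : ℕ} (σ : Equiv.Perm (Fin (j + 1 + r))) (h : Shared σ ⟨j, by omega⟩) :
    ∃ p, tri p = σ := by
  obtain ⟨h1, h2⟩ := h
  obtain ⟨p, rfl⟩ := blk_surj (a := j + 1) σ (by
    intro i hi
    rcases Nat.lt_succ_iff_lt_or_eq.1 hi with hi | hi
    · have := h1 i (by simpa [Fin.lt_def] using hi)
      simp only [Fin.lt_def] at this; omega
    · have : i = ⟨j, by omega⟩ := Fin.ext hi
      rw [this, h2]; simp)
  obtain ⟨q, hq⟩ := blk_surj (a := j) p.1 (by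
    intro i hi
    have := h1 (Fin.castAdd r i) (by simpa [Fin.lt_def] using hi)
    rw [blk_castAdd] at this
    simpa [Fin.lt_def] using this)
  refine ⟨(q.1, p.2), ?_⟩
  unfold tri
  have : (q.1, (1 : Equiv.Perm (Fin 1))) = q := Prod.ext rfl (Subsingleton.elim _ _)
  simp only [this, hq]

lemma pt_G {n : ℕ} {σ : Equiv.Perm (Fin n)} (h : σ ∈ G n) : pt σ = List.replicate n false := by
  rw [List.eq_replicate_iff]
  refine ⟨by simp, fun b hb => ?_⟩
  cases b
  · rfl
  · simp [G] at h; exact absurd hb h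

lemma idx_G {n : ℕ} {σ : Equiv.Perm (Fin n)} : (pt σ).idxOf true = n ↔ σ ∈ G n := by
  have := List.idxOf_eq_length_iff (a := true) (l := pt σ)
  rw [pt_length] at this
  rw [this]; simp [G]

lemma sum_fiber {M : Type*} [AddCommMonoid M] (j r : ℕ) (f : List Bool → M) :
    ∑ σ : Equiv.Perm (Fin (j + 1 + r)) with (pt σ).idxOf true = j, f (pt σ) =
      (G j).card • ∑ β : Equiv.Perm (Fin r), f (List.replicate j false ++ true :: pt β) := by
  have : (G j).card • ∑ β : Equiv.Perm (Fin r), f (List.replicate j false ++ true :: pt β) =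
      ∑ p ∈ (G j) ×ˢ (Finset.univ : Finset (Equiv.Perm (Fin r))), f (pt (tri p)) := by
    rw [Finset.sum_product, ← Finset.sum_const]
    refine Finset.sum_congr rfl fun α hα => Finset.sum_congr rfl fun β _ => ?_
    rw [pt_tri, pt_G hα]
  rw [this, ← Finset.sum_image (f := fun σ => f (pt σ)) (g := tri) (fun _ _ _ _ h => tri_inj h)]
  refine Finset.sum_congr ?_ fun _ _ => rfl
  ext σ
  simp only [Finset.mem_filter, Finset.mem_univ, true_and, Finset.mem_image, Finset.mem_product, and_true]
  constructor
  · intro h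
    have hlt : (pt σ).idxOf true < (pt σ).length := by rw [h]; simp; omega
    have hg := List.getElem_idxOf hlt
    simp only [h] at hg
    have hs : Shared σ ⟨j, by omega⟩ := by simpa [pt] using hg
    obtain ⟨p, rfl⟩ := tri_surj σ hs
    refine ⟨p, ?_, rfl⟩
    rw [pt_tri, List.idxOf_append] at h
    split_ifs at h with h'
    · have := List.idxOf_lt_length_iff.2 h'
      rw [pt_length] at this; omega
    · simpa [G] using h'
  · rintro ⟨p, hp, rfl⟩
    have hp' : true ∉ pt p.1 := by simpa [G] using hp
    rw [pt_tri, List.idxOf_append_of_notMem hp']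
    simp

lemma sum_rec {M : Type*} [AddCommMonoid M] (n : ℕ) (f : List Bool → M) :
    ∑ σ : Equiv.Perm (Fin n), f (pt σ) = (G n).card • f (List.replicate n false) +
      ∑ j ∈ Finset.range n, (G j).card • ∑ β : Equiv.Perm (Fin (n - 1 - j)),
        f (List.replicate j false ++ true :: pt β) := by
  rw [← Finset.sum_fiberwise_of_maps_to (s := Finset.univ) (t := Finset.range (n + 1))
    (g := fun σ : Equiv.Perm (Fin n) => (pt σ).idxOf true)
    (fun σ _ => by
      have := List.idxOf_le_length (a := true) (l := pt σ)
      rw [pt_length] at this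
      simp; omega), Finset.sum_range_succ, add_comm]
  congr 1
  · rw [← Finset.sum_const]
    have : (Finset.univ.filter fun σ : Equiv.Perm (Fin n) => (pt σ).idxOf true = n) = G n := by
      ext σ; simp [idx_G]
    rw [this]
    exact Finset.sum_congr rfl fun σ hσ => by rw [pt_G hσ]
  · refine Finset.sum_congr rfl fun j hj => ?_
    obtain ⟨r, rfl⟩ : ∃ r, n = j + 1 + r := ⟨n - 1 - j, by have := Finset.mem_range.1 hj; omega⟩
    have hr : j + 1 + r - 1 - j = r := by omega
    rw [hr]
    exact sum_fiber j r f

lemma fact_rec (n : ℕ) : n.factorial = (G n).card +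
    ∑ j ∈ Finset.range n, (G j).card * (n - 1 - j).factorial := by
  have := sum_rec n (fun _ => (1 : ℕ))
  simpa [Fintype.card_perm] using this

lemma G_le (n : ℕ) : (G n).card ≤ n.factorial := by
  have := fact_rec n; omega

lemma G_zero : (G 0).card = 1 := by
  have := fact_rec 0; simpa using this.symm

lemma G_one : (G 1).card = 0 := by
  have := fact_rec 1; simp [G_zero] at this; simp [this]

end RandomHypercube

namespace RandomHypercube

noncomputable def aa (m : ℕ) : ℝ := ((2 * m).factorial : ℝ) / (m.factorial : ℝ)

lemma aa_pos (m : ℕ) : 0 < aa m := by unfold aa; positivity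

lemma aa_zero : aa 0 = 1 := by simp [aa]

lemma aa_succ (l : ℕ) : aa (l + 1) = 2 * (2 * l + 1) * aa l := by
  unfold aa
  have h1 : 2 * (l + 1) = (2 * l + 1) + 1 := by ring
  rw [h1, Nat.factorial_succ, Nat.factorial_succ, Nat.factorial_succ]
  have : (l.factorial : ℝ) ≠ 0 := by positivity
  push_cast
  field_simp
  ring

lemma aa_two : aa 2 = 12 := by
  rw [aa_succ, aa_succ, aa_zero]; norm_num

lemma aa_mul_aux (i : ℕ) : ∀ j, i ≤ j → aa (i + 2) * aa (j + 2) ≤ 12 * aa (i + j + 2) := by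
  induction i with
  | zero => intro j _; simp [aa_two]
  | succ i ih =>
    intro j hj
    have h := ih (j + 1) (by omega)
    have e1 : aa (i + 1 + 2) = 2 * (2 * (i + 2 : ℕ) + 1) * aa (i + 2) := aa_succ (i + 2)
    have e2 : aa (j + 1 + 2) = 2 * (2 * (j + 2 : ℕ) + 1) * aa (j + 2) := aa_succ (j + 2)
    have e3 : i + 1 + j + 2 = i + (j + 1) + 2 := by ring
    rw [e3]
    refine le_trans ?_ h
    rw [e1, e2]
    have p1 := aa_pos (i + 2)
    have p2 := aa_pos (j + 2)
    have hij : ((i : ℕ) : ℝ) + 1 ≤ j := by exact_mod_cast hj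
    have : (2 * (2 * ((i + 2 : ℕ) : ℝ) + 1)) ≤ 2 * (2 * ((j + 2 : ℕ) : ℝ) + 1) := by
      push_cast; linarith
    nlinarith [mul_pos p1 p2, mul_le_mul_of_nonneg_right this (mul_pos p1 p2).le]

lemma aa_mul (i j : ℕ) : aa (i + 2) * aa (j + 2) ≤ 12 * aa (i + j + 2) := by
  rcases le_total i j with h | h
  · exact aa_mul_aux i j h
  · rw [mul_comm, add_comm i j]; exact aa_mul_aux j i h

noncomputable def ah (m : ℕ) : ℝ := if m < 2 then 0 else aa m

lemma ah_nonneg (m : ℕ) : 0 ≤ ah m := by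
  unfold ah; split_ifs
  · exact le_rfl
  · exact (aa_pos m).le

lemma ah_le (m : ℕ) : ah m ≤ aa m := by
  unfold ah; split_ifs
  · exact (aa_pos m).le
  · exact le_rfl

lemma conv_bound (q : ℕ) : ∑ p ∈ Finset.HasAntidiagonal.antidiagonal (q + 4), ah p.1 * ah p.2 ≤
    (q + 1) * (3 / ((2 * q + 7) * (2 * q + 5))) * aa (q + 4) := by
  have h1 : ∀ p ∈ Finset.HasAntidiagonal.antidiagonal (q + 4), ah p.1 * ah p.2 ≤
      if p.1 ∈ Finset.Icc 2 (q + 2) then 12 * aa (q + 2) else 0 := by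
    rintro ⟨i, j⟩ hp
    have hp' : i + j = q + 4 := by simpa using hp
    by_cases h : i ∈ Finset.Icc 2 (q + 2)
    · simp only [h, if_true]
      rw [Finset.mem_Icc] at h
      obtain ⟨i, rfl⟩ : ∃ i', i = i' + 2 := ⟨i - 2, by omega⟩
      obtain ⟨j, rfl⟩ : ∃ i', j = i' + 2 := ⟨j - 2, by omega⟩
      have := aa_mul i j
      have e : i + j + 2 = q + 2 := by omega
      rw [e] at this
      refine le_trans ?_ this
      exact mul_le_mul (ah_le _) (ah_le _) (ah_nonneg _) (aa_pos _).le
    · simp only [h, if_false]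
      rw [Finset.mem_Icc] at h
      have : i < 2 ∨ j < 2 := by omega
      rcases this with h | h <;> simp [ah, h]
  refine (Finset.sum_le_sum h1).trans ?_
  rw [Finset.Nat.sum_antidiagonal_eq_sum_range_succ
    (fun i _ => if i ∈ Finset.Icc 2 (q + 2) then 12 * aa (q + 2) else 0), ← Finset.sum_filter,
    Finset.sum_const]
  have : (Finset.filter (fun i => i ∈ Finset.Icc 2 (q + 2)) (Finset.range (q + 4).succ)) =
      Finset.Icc 2 (q + 2) := by
    ext i; simp only [Finset.mem_filter, Finset.mem_range, Finset.mem_Icc]; omega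
  rw [this, Nat.card_Icc]
  have e4 : aa (q + 4) = 2 * (2 * (q + 3 : ℕ) + 1) * (2 * (2 * (q + 2 : ℕ) + 1) * aa (q + 2)) := by
    rw [← aa_succ (q + 2), ← aa_succ (q + 3)]
  rw [e4]
  have : q + 2 + 1 - 2 = q + 1 := by omega
  rw [this, nsmul_eq_mul]
  push_cast
  apply le_of_eq
  field_simp
  ring

lemma conv_zero (m : ℕ) (hm : m < 4) : ∑ p ∈ Finset.HasAntidiagonal.antidiagonal m, ah p.1 * ah p.2 = 0 := by
  refine Finset.sum_eq_zero ?_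
  rintro ⟨i, j⟩ hp
  have hp' : i + j = m := by simpa using hp
  have : i < 2 ∨ j < 2 := by omega
  rcases this with h | h <;> simp [ah, h]

lemma conv8 (m : ℕ) : ∑ p ∈ Finset.HasAntidiagonal.antidiagonal m, ah p.1 * ah p.2 ≤ (1 / 8) * ah m := by
  by_cases hm : m < 4
  · rw [conv_zero m hm]; have := ah_nonneg m; positivity
  · obtain ⟨q, rfl⟩ : ∃ q, m = q + 4 := ⟨m - 4, by omega⟩
    refine (conv_bound q).trans ?_
    have : ah (q + 4) = aa (q + 4) := by simp [ah]
    rw [this]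
    refine mul_le_mul_of_nonneg_right ?_ (aa_pos _).le
    have hq : (0 : ℝ) ≤ q := by positivity
    rw [← mul_div_assoc, div_le_div_iff₀ (by positivity) (by norm_num)]
    nlinarith [sq_nonneg ((q : ℝ) - 0)]

lemma convm (m : ℕ) : ∑ p ∈ Finset.HasAntidiagonal.antidiagonal m, ah p.1 * ah p.2 ≤ (1 / m) * aa m := by
  by_cases hm : m < 4
  · rw [conv_zero m hm]; have := (aa_pos m).le; positivity
  · obtain ⟨q, rfl⟩ : ∃ q, m = q + 4 := ⟨m - 4, by omega⟩
    refine (conv_bound q).trans ?_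
    refine mul_le_mul_of_nonneg_right ?_ (aa_pos _).le
    have hq : (0 : ℝ) ≤ q := by positivity
    push_cast
    rw [← mul_div_assoc, div_le_div_iff₀ (by positivity) (by positivity)]
    nlinarith

noncomputable def hh (m : ℕ) : ℝ := ((G m).card : ℝ) * ((2 * m).choose m : ℝ)

lemma hh_zero : hh 0 = 1 := by simp [hh, G_zero]
lemma hh_one : hh 1 = 0 := by simp [hh, G_one]

lemma hh_nonneg (m : ℕ) : 0 ≤ hh m := by unfold hh; positivity

lemma hh_eq (m : ℕ) : hh m = ((G m).card : ℝ) / (m.factorial : ℝ) * aa m := by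
  unfold hh aa
  have := Nat.choose_mul_factorial_mul_factorial (n := 2 * m) (k := m) (by omega)
  have e : 2 * m - m = m := by omega
  rw [e] at this
  rw [← this]
  have : (m.factorial : ℝ) ≠ 0 := by positivity
  push_cast
  field_simp

lemma hh_le (m : ℕ) : hh m ≤ aa m := by
  rw [hh_eq]
  refine mul_le_of_le_one_left (aa_pos m).le ?_
  rw [div_le_one (by positivity)]
  exact_mod_cast G_le m

noncomputable def HT : PowerSeries ℝ := PowerSeries.mk fun m => if m < 2 then 0 else hh m

noncomputable def HS : PowerSeries ℝ := PowerSeries.mk hh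

lemma HS_eq : HS = HT + 1 := by
  ext m
  rw [HS, HT, map_add, PowerSeries.coeff_mk, PowerSeries.coeff_mk, PowerSeries.coeff_one]
  rcases m with _ | _ | m
  · simp [hh_zero]
  · simp [hh_one]
  · simp

lemma HT_nonneg (m : ℕ) : 0 ≤ PowerSeries.coeff m HT := by
  rw [HT, PowerSeries.coeff_mk]; split_ifs
  · exact le_rfl
  · exact hh_nonneg m

lemma HT_le (m : ℕ) : PowerSeries.coeff m HT ≤ ah m := by
  rw [HT, PowerSeries.coeff_mk, ah]; split_ifs
  · exact le_rfl
  · exact hh_le m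

lemma HTp_nonneg (j : ℕ) : ∀ m, 0 ≤ PowerSeries.coeff m (HT ^ j) := by
  induction j with
  | zero => intro m; rw [pow_zero, PowerSeries.coeff_one]; split_ifs <;> norm_num
  | succ j ih =>
    intro m
    rw [pow_succ, PowerSeries.coeff_mul]
    exact Finset.sum_nonneg fun p _ => mul_nonneg (ih _) (HT_nonneg _)

lemma HTp_step (j m : ℕ) (C : ℝ) (hC : 0 ≤ C) (h : ∀ i, PowerSeries.coeff i (HT ^ j) ≤ C * ah i) :
    PowerSeries.coeff m (HT ^ (j + 1)) ≤ C * ∑ p ∈ Finset.HasAntidiagonal.antidiagonal m, ah p.1 * ah p.2 := by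
  rw [pow_succ, PowerSeries.coeff_mul, Finset.mul_sum]
  refine Finset.sum_le_sum fun p _ => ?_
  rw [← mul_assoc]
  exact mul_le_mul (h _) (HT_le _) (HT_nonneg _) (mul_nonneg hC (ah_nonneg _))

lemma HTp_le (j : ℕ) : ∀ m, PowerSeries.coeff m (HT ^ (j + 1)) ≤ (1 / 8) ^ j * ah m := by
  induction j with
  | zero => intro m; simpa using HT_le m
  | succ j ih =>
    intro m
    refine (HTp_step (j + 1) m ((1 / 8) ^ j) (by positivity) ih).trans ?_
    rw [pow_succ, mul_assoc]
    exact mul_le_mul_of_nonneg_left (conv8 m) (by positivity)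

lemma HTp_le2 (j m : ℕ) : PowerSeries.coeff m (HT ^ (j + 2)) ≤ (1 / m) * aa m := by
  refine (HTp_step (j + 1) m ((1 / 8) ^ j) (by positivity) (HTp_le j)).trans ?_
  refine le_trans ?_ (convm m)
  refine mul_le_of_le_one_left ?_ (pow_le_one₀ (by norm_num) (by norm_num))
  exact Finset.sum_nonneg fun p _ => mul_nonneg (ah_nonneg _) (ah_nonneg _)

lemma HTp_zero (j m : ℕ) (h : m < 2 * j) : PowerSeries.coeff m (HT ^ j) = 0 := by
  have h1 : (PowerSeries.X : PowerSeries ℝ) ^ 2 ∣ HT := by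
    rw [PowerSeries.X_pow_dvd_iff]
    intro i hi
    rw [HT, PowerSeries.coeff_mk, if_pos hi]
  have h2 := pow_dvd_pow_of_dvd h1 j
  rw [← pow_mul, PowerSeries.X_pow_dvd_iff] at h2
  exact h2 m h

lemma HS_pow (K m : ℕ) : PowerSeries.coeff m (HS ^ K) =
    ∑ j ∈ Finset.range (K + 1), (K.choose j : ℝ) * PowerSeries.coeff m (HT ^ j) := by
  rw [HS_eq, add_pow, map_sum]
  refine Finset.sum_congr rfl fun j _ => ?_
  rw [one_pow, mul_one, ← map_natCast (PowerSeries.C (R := ℝ)), PowerSeries.coeff_mul_C, mul_comm]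

lemma HS_nonneg (K m : ℕ) : 0 ≤ PowerSeries.coeff m (HS ^ K) := by
  rw [HS_pow]
  exact Finset.sum_nonneg fun j _ => mul_nonneg (by positivity) (HTp_nonneg _ _)

lemma HS_bound (K m : ℕ) (hm : 1 ≤ m) (z : ℝ) (hz : 1 ≤ z) :
    PowerSeries.coeff m (HS ^ K) ≤ 8 * aa m * z ^ m * (1 / (8 * z ^ 2) + 1) ^ K := by
  rw [HS_pow, add_pow, Finset.mul_sum]
  have hz0 : 0 < z := by linarith
  refine Finset.sum_le_sum fun j _ => ?_
  have ha := aa_pos m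
  have key : PowerSeries.coeff m (HT ^ j) ≤ 8 * aa m * z ^ m * (1 / (8 * z ^ 2)) ^ j := by
    by_cases h : m < 2 * j
    · rw [HTp_zero j m h]; positivity
    · have h1 : PowerSeries.coeff m (HT ^ j) ≤ 8 * (1 / 8) ^ j * aa m := by
        rcases j with _ | j
        · rw [pow_zero, PowerSeries.coeff_one, if_neg (by omega)]; positivity
        · refine (HTp_le j m).trans ?_
          have e : (8 : ℝ) * (1 / 8) ^ (j + 1) = (1 / 8) ^ j := by rw [pow_succ]; ring
          rw [e]
          exact mul_le_mul_of_nonneg_left (ah_le m) (by positivity)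
      refine h1.trans ?_
      have h2 : z ^ (2 * j) ≤ z ^ m := pow_le_pow_right₀ hz (by omega)
      have e : 8 * aa m * z ^ m * (1 / (8 * z ^ 2)) ^ j =
          8 * (1 / 8) ^ j * aa m * (z ^ m / z ^ (2 * j)) := by
        rw [pow_mul, div_pow, mul_pow, div_pow]; field_simp
      rw [e]
      refine le_mul_of_one_le_right (by positivity) ?_
      rw [one_le_div (by positivity)]; exact h2
  calc _ ≤ (K.choose j : ℝ) * (8 * aa m * z ^ m * (1 / (8 * z ^ 2)) ^ j) :=
        mul_le_mul_of_nonneg_left key (by positivity)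
    _ = _ := by rw [one_pow]; ring

noncomputable def uu (k m : ℕ) : ℝ := ((k + m).factorial : ℝ) * aa m / ((k + 2 * m).factorial : ℝ)

noncomputable def TT (k m : ℕ) : ℝ :=
  ((k + m).factorial : ℝ) * PowerSeries.coeff m (HS ^ (k + 1)) / ((k + 2 * m).factorial : ℝ)

lemma uu_zero (m : ℕ) : uu 0 m = 1 := by
  unfold uu aa
  have : ((2 * m).factorial : ℝ) ≠ 0 := by positivity
  simp only [zero_add]
  field_simp

lemma uu_nonneg (k m : ℕ) : 0 ≤ uu k m := by
  unfold uu; have := aa_pos m; positivity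

lemma uu_succ (k m : ℕ) : uu (k + 1) m = uu k m * (((k : ℝ) + m + 1) / (k + 2 * m + 1)) := by
  unfold uu
  have e1 : k + 1 + m = (k + m) + 1 := by ring
  have e2 : k + 1 + 2 * m = (k + 2 * m) + 1 := by ring
  rw [e1, e2, Nat.factorial_succ, Nat.factorial_succ]
  have : ((k + 2 * m).factorial : ℝ) ≠ 0 := by positivity
  push_cast
  field_simp

lemma uu_leA (m k : ℕ) (h : k ≤ 3 * m) : uu k m ≤ (4 / 5) ^ k := by
  induction k with
  | zero => simp [uu_zero]
  | succ k ih =>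
    rw [uu_succ, pow_succ]
    refine mul_le_mul (ih (by omega)) ?_ (by positivity) (by positivity)
    have : (k : ℝ) + 1 ≤ 3 * m := by exact_mod_cast h
    rw [div_le_div_iff₀ (by positivity) (by norm_num)]
    linarith

lemma uu_leB (m k : ℕ) (hk : 0 < k) : uu k m ≤ (2 * m / ((k + m : ℕ) : ℝ)) ^ m := by
  unfold uu aa
  have h1 : (2 * m).factorial ≤ m.factorial * (2 * m) ^ m := by
    have h3 := Nat.factorial_mul_descFactorial (n := 2 * m) (k := m) (by omega)
    have e : 2 * m - m = m := by omega
    rw [← h3, e]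
    exact Nat.mul_le_mul_left _ (Nat.descFactorial_le_pow _ _)
  have h2 : (k + m).factorial * (k + m) ^ m ≤ (k + 2 * m).factorial := by
    have := Nat.factorial_mul_pow_le_factorial (m := k + m) (n := m)
    have e : k + 2 * m = k + m + m := by ring
    rw [e]
    refine le_trans ?_ this
    exact Nat.mul_le_mul_left _ (Nat.pow_le_pow_left (by omega) _)
  have h1' : ((2 * m).factorial : ℝ) ≤ m.factorial * (2 * m) ^ m := by exact_mod_cast h1
  have h2' : ((k + m).factorial : ℝ) * ((k + m : ℕ) : ℝ) ^ m ≤ (k + 2 * m).factorial := by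
    exact_mod_cast h2
  have hn0 : (0 : ℝ) < ((k + m : ℕ) : ℝ) := by exact_mod_cast (by omega : 0 < k + m)
  have hf : (0 : ℝ) < (m.factorial : ℝ) := by positivity
  have h1'' : ((2 * m).factorial : ℝ) / m.factorial ≤ (2 * m) ^ m := by
    rw [div_le_iff₀ hf]; linarith
  rw [div_pow, div_le_div_iff₀ (by positivity) (by positivity)]
  calc _ = (((2 * m).factorial : ℝ) / m.factorial) * (((k + m).factorial : ℝ) * ((k + m : ℕ) : ℝ) ^ m) := by ring
    _ ≤ _ := mul_le_mul h1'' h2' (by positivity) (by positivity)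

lemma TT_nonneg (k m : ℕ) : 0 ≤ TT k m := by
  unfold TT; have := HS_nonneg (k + 1) m; positivity

lemma TT_le (k m : ℕ) (hm : 1 ≤ m) (z : ℝ) (hz : 1 ≤ z) :
    TT k m ≤ 8 * uu k m * z ^ m * (1 / (8 * z ^ 2) + 1) ^ (k + 1) := by
  have := HS_bound (k + 1) m hm z hz
  unfold TT uu
  rw [div_le_iff₀ (by positivity)]
  calc _ ≤ ((k + m).factorial : ℝ) * (8 * aa m * z ^ m * (1 / (8 * z ^ 2) + 1) ^ (k + 1)) :=
        mul_le_mul_of_nonneg_left this (by positivity)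
    _ = _ := by field_simp

lemma TT_leA (k m : ℕ) (hm : 1 ≤ m) (h : k ≤ 3 * m) : TT k m ≤ 9 * (9 / 10) ^ k := by
  refine (TT_le k m hm 1 le_rfl).trans ?_
  have := uu_leA m k h
  have e : (9 / 10 : ℝ) ^ k = (4 / 5) ^ k * (9 / 8) ^ k := by rw [← mul_pow]; norm_num
  rw [e, one_pow, pow_succ]
  norm_num
  have h9 : (0 : ℝ) < (9 / 8) ^ k := by positivity
  nlinarith [mul_le_mul_of_nonneg_right this h9.le]

lemma TT_leB (k m : ℕ) (hm : 1 ≤ m) (h : 3 * m < k) :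
    TT k m ≤ 8 * (Real.exp (1 / 2) / 2 * (Real.sqrt (4 * m / ((k + m : ℕ) : ℝ)))) ^ m := by
  have hm0 : (0 : ℝ) < m := by exact_mod_cast hm
  have hn0 : (0 : ℝ) < ((k + m : ℕ) : ℝ) := by exact_mod_cast (by omega : 0 < k + m)
  have hmn : 4 * (m : ℝ) < ((k + m : ℕ) : ℝ) := by exact_mod_cast (by omega : 4 * m < k + m)
  set N : ℝ := ((k + m : ℕ) : ℝ) with hN
  set w := Real.sqrt (4 * m / N) with hw
  have hw0 : 0 < w := Real.sqrt_pos.2 (by positivity)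
  have hw2 : w ^ 2 = 4 * m / N := Real.sq_sqrt (by positivity)
  have hw1 : w ≤ 1 := by
    rw [hw, Real.sqrt_le_one]
    rw [div_le_one hn0]; exact hmn.le
  have hb := TT_le k m hm (1 / w) (by rw [le_div_iff₀ hw0]; linarith)
  refine hb.trans ?_
  have h1 : (1 / (8 * (1 / w) ^ 2) + 1) ^ (k + 1) ≤ Real.exp (1 / 2) ^ m := by
    have e : 1 / (8 * (1 / w) ^ 2) = m / (2 * N) := by
      rw [div_pow, one_pow]
      field_simp
      rw [hw2]; field_simp; norm_num
    rw [e]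
    calc _ ≤ Real.exp (m / (2 * N)) ^ (k + 1) :=
          pow_le_pow_left₀ (by positivity) (Real.add_one_le_exp _) _
      _ = Real.exp ((k + 1 : ℕ) * (m / (2 * N))) := by rw [Real.exp_nat_mul]
      _ ≤ Real.exp (m * (1 / 2)) := by
          apply Real.exp_le_exp.2
          have : ((k + 1 : ℕ) : ℝ) ≤ N := by rw [hN]; exact_mod_cast (by omega : k + 1 ≤ k + m)
          rw [← mul_div_assoc, div_le_iff₀ (by positivity)]
          nlinarith
      _ = _ := by rw [Real.exp_nat_mul]
  have h2 : uu k m ≤ (w ^ 2 / 2) ^ m := by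
    refine (uu_leB m k (by omega)).trans (le_of_eq ?_)
    rw [hw2]; congr 1; ring
  calc _ ≤ 8 * (w ^ 2 / 2) ^ m * (1 / w) ^ m * Real.exp (1 / 2) ^ m := by
        gcongr
    _ = 8 * ((w ^ 2 / 2) * (1 / w) * Real.exp (1 / 2)) ^ m := by
        rw [mul_pow, mul_pow]; ring
    _ = _ := by congr 2; field_simp

end RandomHypercube

namespace RandomHypercube

lemma fact_prod_le (i j : ℕ) : (j + 1).factorial * (i + 1).factorial ≤ (i + j + 1).factorial := by
  induction j with
  | zero => simp
  | succ j ih =>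
    rw [Nat.factorial_succ (j + 1), mul_assoc]
    have e : i + (j + 1) + 1 = (i + j + 1) + 1 := by ring
    rw [e, Nat.factorial_succ (i + j + 1)]
    exact Nat.mul_le_mul (by omega) ih

lemma G_lower (q : ℕ) : (q + 2).factorial ≤ (G (q + 2)).card + 3 * (q + 1).factorial := by
  have h := fact_rec (q + 2)
  have hs : ∑ j ∈ Finset.range (q + 2), (G j).card * (q + 2 - 1 - j).factorial ≤
      3 * (q + 1).factorial := by
    calc _ ≤ ∑ j ∈ Finset.range (q + 2), j.factorial * (q + 1 - j).factorial := by
          refine Finset.sum_le_sum fun j _ => ?_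
          exact Nat.mul_le_mul (G_le j) (le_of_eq (by congr 1))
      _ = ∑ j ∈ Finset.range q, (j + 1).factorial * (q - j).factorial + 2 * (q + 1).factorial := by
          rw [Finset.sum_range_succ, Finset.sum_range_succ']
          simp only [Nat.add_sub_add_right, Nat.factorial_zero, Nat.sub_zero, one_mul, Nat.sub_self, mul_one]
          ring
      _ ≤ ∑ j ∈ Finset.range q, q.factorial + 2 * (q + 1).factorial := by
          refine Nat.add_le_add_right (Finset.sum_le_sum fun j hj => ?_) _
          have hj := Finset.mem_range.1 hj
          obtain ⟨i, rfl⟩ : ∃ i, q = i + j + 1 := ⟨q - j - 1, by omega⟩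
          have e : i + j + 1 - j = i + 1 := by omega
          rw [e]
          exact fact_prod_le i j
      _ ≤ _ := by
          rw [Finset.sum_const, Finset.card_range, smul_eq_mul, Nat.factorial_succ]
          nlinarith [Nat.factorial_pos q]
  omega

lemma G_tendsto : Tendsto (fun m : ℕ => ((G m).card : ℝ) / (m.factorial : ℝ)) atTop (nhds 1) := by
  have h0 : Tendsto (fun m : ℕ => (1 : ℝ) - 3 * (1 / (m : ℝ))) atTop (nhds (1 - 3 * 0)) :=
    tendsto_const_nhds.sub (tendsto_one_div_atTop_nhds_zero_nat.const_mul 3)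
  rw [mul_zero, sub_zero] at h0
  refine tendsto_of_tendsto_of_tendsto_of_le_of_le' h0 tendsto_const_nhds ?_ ?_
  · filter_upwards [eventually_ge_atTop 2] with m hm
    obtain ⟨q, rfl⟩ : ∃ q, m = q + 2 := ⟨m - 2, by omega⟩
    have h := G_lower q
    have h' : ((q + 2).factorial : ℝ) ≤ ((G (q + 2)).card : ℝ) + 3 * ((q + 1).factorial : ℝ) := by
      exact_mod_cast h
    rw [le_div_iff₀ (by positivity)]
    have e : ((q + 2).factorial : ℝ) = ((q + 2 : ℕ) : ℝ) * ((q + 1).factorial : ℝ) := by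
      rw [Nat.factorial_succ (q + 1)]; push_cast; ring
    have hq : ((q + 2 : ℕ) : ℝ) ≠ 0 := by positivity
    have : (1 - 3 * (1 / ((q + 2 : ℕ) : ℝ))) * ((q + 2).factorial : ℝ) =
      ((q + 2).factorial : ℝ) - 3 * ((q + 1).factorial : ℝ) := by
      rw [sub_mul, one_mul]
      congr 1
      rw [e]
      field_simp
    linarith
  · filter_upwards with m
    rw [div_le_one (by positivity)]
    exact_mod_cast G_le m

lemma HTp_tendsto (j : ℕ) : Tendsto (fun m : ℕ => PowerSeries.coeff m (HT ^ j) / aa m) atTop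
    (nhds (if j = 1 then 1 else 0)) := by
  rcases j with _ | _ | j
  · simp only [zero_ne_one, if_false]
    refine tendsto_const_nhds.congr' ?_
    filter_upwards [eventually_ge_atTop 1] with m hm
    rw [pow_zero, PowerSeries.coeff_one, if_neg (by omega), zero_div]
  · simp only [zero_add, if_true, pow_one]
    refine G_tendsto.congr' ?_
    filter_upwards [eventually_ge_atTop 2] with m hm
    rw [HT, PowerSeries.coeff_mk, if_neg (by omega), hh_eq, mul_div_cancel_right₀ _ (aa_pos m).ne']
  · rw [if_neg (by omega)]
    refine squeeze_zero (fun m => div_nonneg (HTp_nonneg _ _) (aa_pos m).le) (fun m => ?_)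
      tendsto_one_div_atTop_nhds_zero_nat
    rw [div_le_iff₀ (aa_pos m)]
    exact HTp_le2 j m

lemma HS_tendsto (K : ℕ) : Tendsto (fun m : ℕ => PowerSeries.coeff m (HS ^ K) / aa m) atTop
    (nhds K) := by
  have : Tendsto (fun m : ℕ => ∑ j ∈ Finset.range (K + 1), (K.choose j : ℝ) *
      (PowerSeries.coeff m (HT ^ j) / aa m)) atTop
      (nhds (∑ j ∈ Finset.range (K + 1), (K.choose j : ℝ) * (if j = 1 then 1 else 0))) :=
    tendsto_finsetSum _ fun j _ => (HTp_tendsto j).const_mul _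
  have e : ∑ j ∈ Finset.range (K + 1), (K.choose j : ℝ) * (if j = 1 then 1 else 0) = K := by
    simp only [mul_ite, mul_one, mul_zero, Finset.sum_ite_eq', Finset.mem_range, Nat.choose_one_right]
    split_ifs with h
    · rfl
    · have : K = 0 := by omega
      simp [this]
  rw [e] at this
  refine this.congr fun m => ?_
  rw [HS_pow, Finset.sum_div]
  exact Finset.sum_congr rfl fun j _ => by ring

lemma uu_tendsto (k : ℕ) : Tendsto (fun m : ℕ => uu k m) atTop (nhds ((1 / 2) ^ k)) := by
  induction k with
  | zero => simp [uu_zero]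
  | succ k ih =>
    simp only [uu_succ, pow_succ]
    refine ih.mul ?_
    have h : Tendsto (fun m : ℕ => (((k : ℝ) + 1) * (1 / (m : ℝ)) + 1) / (((k : ℝ) + 1) * (1 / (m : ℝ)) + 2))
        atTop (nhds ((((k : ℝ) + 1) * 0 + 1) / (((k : ℝ) + 1) * 0 + 2))) := by
      have h1 := tendsto_one_div_atTop_nhds_zero_nat (𝕜 := ℝ)
      refine ((h1.const_mul _).add_const _).div ((h1.const_mul _).add_const _) (by norm_num)
    simp only [mul_zero, zero_add] at h
    refine h.congr' ?_
    filter_upwards [eventually_gt_atTop 0] with m hm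
    have : (0 : ℝ) < m := by exact_mod_cast hm
    field_simp
    ring

lemma TT_tendsto (k : ℕ) : Tendsto (fun m : ℕ => TT k m) atTop (nhds (((k : ℝ) + 1) * (1 / 2) ^ k)) := by
  have h := (HS_tendsto (k + 1)).mul (uu_tendsto k)
  push_cast at h
  refine h.congr fun m => ?_
  unfold TT uu
  have := (aa_pos m).ne'
  field_simp

lemma TT_zero (n : ℕ) : TT n 0 = 1 := by
  unfold TT
  have : PowerSeries.coeff 0 (HS ^ (n + 1)) = 1 := by
    rw [PowerSeries.coeff_zero_eq_constantCoeff_apply, map_pow,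
      ← PowerSeries.coeff_zero_eq_constantCoeff_apply, HS, PowerSeries.coeff_mk, hh_zero, one_pow]
  rw [this]
  have : (n.factorial : ℝ) ≠ 0 := by positivity
  simp [this]

lemma sum_four : ∑' k : ℕ, ((k : ℝ) + 1) * (1 / 2) ^ k = 4 := by
  have h1 := hasSum_coe_mul_geometric_of_norm_lt_one (𝕜 := ℝ) (r := 1 / 2) (by norm_num)
  have h2 := hasSum_geometric_of_norm_lt_one (ξ := (1 / 2 : ℝ)) (by norm_num)
  have h := h1.add h2
  have e : (1 / 2 : ℝ) / (1 - 1 / 2) ^ 2 + (1 - 1 / 2)⁻¹ = 4 := by norm_num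
  rw [e] at h
  rw [← h.tsum_eq]
  exact tsum_congr fun k => by ring

lemma partA : Tendsto (fun n : ℕ => ∑' k : ℕ, if k < n ∧ n ≤ 4 * (n - k) then TT k (n - k) else 0)
    atTop (nhds 4) := by
  rw [← sum_four]
  refine tendsto_tsum_of_dominated_convergence (bound := fun k => 9 * (9 / 10 : ℝ) ^ k) ?_ ?_ ?_
  · exact (summable_geometric_of_lt_one (by norm_num) (by norm_num)).mul_left 9
  · intro k
    refine ((TT_tendsto k).comp (tendsto_sub_atTop_nat k)).congr' ?_
    filter_upwards [eventually_ge_atTop (4 * k + 1)] with n hn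
    rw [if_pos (by omega)]; rfl
  · filter_upwards with n k
    split_ifs with h
    · rw [Real.norm_of_nonneg (TT_nonneg _ _)]
      exact TT_leA k (n - k) (by omega) (by omega)
    · rw [norm_zero]; positivity

lemma exp_half : Real.exp (1 / 2) / 2 < 9 / 10 := by
  have h : Real.exp (1 / 2) ^ 2 < (9 / 5) ^ 2 := by
    rw [← Real.exp_nat_mul]
    have := Real.exp_one_lt_d9
    norm_num at *
    linarith
  have := lt_of_pow_lt_pow_left₀ 2 (by norm_num) h
  linarith

lemma partB : Tendsto (fun n : ℕ => ∑' m : ℕ, if 1 ≤ m ∧ 4 * m < n then TT (n - m) m else 0)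
    atTop (nhds 0) := by
  have h0 : (0 : ℝ) = ∑' m : ℕ, (0 : ℝ) := by simp
  suffices hsuff : Tendsto (fun n : ℕ => ∑' m : ℕ, if 1 ≤ m ∧ 4 * m < n then TT (n - m) m else 0)
    atTop (nhds (∑' m : ℕ, (0 : ℝ))) by rwa [← h0] at hsuff
  refine tendsto_tsum_of_dominated_convergence (bound := fun m => 8 * (9 / 10 : ℝ) ^ m) ?_ ?_ ?_
  · exact (summable_geometric_of_lt_one (by norm_num) (by norm_num)).mul_left 8
  · intro m
    rcases Nat.eq_zero_or_pos m with rfl | hm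
    · simp
    have hlim : Tendsto (fun n : ℕ => 8 * (Real.exp (1 / 2) / 2 * Real.sqrt (4 * m / (n : ℝ))) ^ m) atTop
        (nhds (8 * (Real.exp (1 / 2) / 2 * Real.sqrt 0) ^ m)) := by
      refine Tendsto.const_mul _ (Tendsto.pow (Tendsto.const_mul _ ?_) _)
      exact (Real.continuous_sqrt.tendsto 0).comp (tendsto_const_div_atTop_nhds_zero_nat _)
    rw [Real.sqrt_zero, mul_zero, zero_pow (by omega), mul_zero] at hlim
    refine squeeze_zero' ?_ ?_ hlim
    · filter_upwards with n
      split_ifs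
      · exact TT_nonneg _ _
      · exact le_rfl
    · filter_upwards with n
      split_ifs with h
      · have := TT_leB (n - m) m h.1 (by omega)
        have e : n - m + m = n := by omega
        rwa [e] at this
      · positivity
  · filter_upwards with n m
    split_ifs with h
    · rw [Real.norm_of_nonneg (TT_nonneg _ _)]
      have := TT_leB (n - m) m h.1 (by omega)
      have e : n - m + m = n := by omega
      rw [e] at this
      refine this.trans ?_
      have hn : (0 : ℝ) < n := by exact_mod_cast (by omega : 0 < n)
      have hs : Real.sqrt (4 * m / (n : ℝ)) ≤ 1 := by
        rw [Real.sqrt_le_one, div_le_one hn]; exact_mod_cast h.2.le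
      gcongr
      calc _ ≤ Real.exp (1 / 2) / 2 * 1 := by gcongr
        _ ≤ 9 / 10 := by rw [mul_one]; exact exp_half.le
    · rw [norm_zero]; positivity

lemma total_tendsto : Tendsto (fun n : ℕ => ∑ k ∈ Finset.range (n + 1), TT k (n - k)) atTop (nhds 5) := by
  have h := (partA.add partB).add (tendsto_const_nhds (x := (1 : ℝ)))
  norm_num at h
  refine h.congr fun n => ?_
  rw [Finset.sum_range_succ, Nat.sub_self, TT_zero]
  congr 1
  rw [tsum_eq_sum (s := Finset.range n) (fun k hk => if_neg (by simp at hk; omega)),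
    tsum_eq_sum (s := Finset.range (n + 1)) (fun k hk => if_neg (by simp at hk; omega)),
    ← Finset.sum_range_reflect _ (n + 1), Finset.sum_range_succ]
  have : (if 1 ≤ n + 1 - 1 - n ∧ 4 * (n + 1 - 1 - n) < n then TT (n - (n + 1 - 1 - n)) (n + 1 - 1 - n) else 0) = 0 :=
    if_neg (by omega)
  rw [this, add_zero, ← Finset.sum_add_distrib]
  refine Finset.sum_congr rfl fun k hk => ?_
  have hk := Finset.mem_range.1 hk
  have e1 : n + 1 - 1 - k = n - k := by omega
  have e2 : n - (n - k) = k := by omega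
  rw [e1, e2]
  by_cases h : n ≤ 4 * (n - k)
  · rw [if_pos ⟨hk, h⟩, if_neg (by omega), add_zero]
  · rw [if_neg (by omega), if_pos (by omega), zero_add]

end RandomHypercube

namespace RandomHypercube
open scoped ENNReal

noncomputable def R : List Bool → ℝ → ℝ → ℝ≥0∞
  | [], _, _ => 1
  | true :: b, s, t => ∫⁻ u in Set.Ioc (max s t) 1, R b u u
  | false :: b, s, t => ∫⁻ u in Set.Ioc s 1, ∫⁻ v in Set.Ioc t 1, R b u v

lemma ms2 {α : Type*} [MeasurableSpace α] {f g h k : α → ℝ} (hf : Measurable f) (hg : Measurable g)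
    (hh : Measurable h) (hk : Measurable k) : MeasurableSet {x | f x < g x ∧ h x ≤ k x} :=
  (measurableSet_lt hf hg).inter (measurableSet_le hh hk)

lemma ms4 {α : Type*} [MeasurableSpace α] {f g h k f' g' h' k' : α → ℝ} (hf : Measurable f) (hg : Measurable g)
    (hf' : Measurable f') (hg' : Measurable g') (hh' : Measurable h') (hk' : Measurable k')
    (hh : Measurable h) (hk : Measurable k) :
    MeasurableSet {x | f x < g x ∧ f' x < g' x ∧ h' x < k' x ∧ h x ≤ k x} :=
  (measurableSet_lt hf hg).inter ((measurableSet_lt hf' hg').inter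
    ((measurableSet_lt hh' hk').inter (measurableSet_le hh hk)))

lemma R_meas (b : List Bool) : Measurable (fun p : ℝ × ℝ => R b p.1 p.2) := by
  induction b with
  | nil => simp only [R]; exact measurable_const
  | cons x b ih =>
    cases x
    · simp only [R]
      simp_rw [← lintegral_indicator measurableSet_Ioc]
      refine Measurable.lintegral_prod_right' (f := fun q : (ℝ × ℝ) × ℝ =>
        (Set.Ioc q.1.1 1).indicator (fun u => ∫⁻ v, (Set.Ioc q.1.2 1).indicator (fun v => R b u v) v) q.2) ?_
      have h1 : Measurable (fun q : (ℝ × ℝ) × ℝ =>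
          ∫⁻ v, (Set.Ioc q.1.2 1).indicator (fun v => R b q.2 v) v) := by
        refine Measurable.lintegral_prod_right' (f := fun q : ((ℝ × ℝ) × ℝ) × ℝ =>
          (Set.Ioc q.1.1.2 1).indicator (fun v => R b q.1.2 v) q.2) ?_
        have : (fun q : ((ℝ × ℝ) × ℝ) × ℝ =>
          (Set.Ioc q.1.1.2 1).indicator (fun v => R b q.1.2 v) q.2) =
          Set.indicator {q : ((ℝ × ℝ) × ℝ) × ℝ | q.1.1.2 < q.2 ∧ q.2 ≤ 1} (fun q => R b q.1.2 q.2) := by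
          funext q; simp only [Set.indicator, Set.mem_Ioc, Set.mem_ofPred_eq]
        rw [this]
        refine Measurable.indicator (ih.comp (f := fun q : ((ℝ × ℝ) × ℝ) × ℝ => (q.1.2, q.2)) (by fun_prop)) ?_
        exact ms2 (by fun_prop) (by fun_prop) (by fun_prop) (by fun_prop)
      have : (fun q : (ℝ × ℝ) × ℝ =>
        (Set.Ioc q.1.1 1).indicator (fun u => ∫⁻ v, (Set.Ioc q.1.2 1).indicator (fun v => R b u v) v) q.2) =
        Set.indicator {q : (ℝ × ℝ) × ℝ | q.1.1 < q.2 ∧ q.2 ≤ 1}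
          (fun q => ∫⁻ v, (Set.Ioc q.1.2 1).indicator (fun v => R b q.2 v) v) := by
        funext q; simp only [Set.indicator, Set.mem_Ioc, Set.mem_ofPred_eq]
      rw [this]
      refine Measurable.indicator h1 ?_
      exact ms2 (by fun_prop) (by fun_prop) (by fun_prop) (by fun_prop)
    · simp only [R]
      simp_rw [← lintegral_indicator measurableSet_Ioc]
      refine Measurable.lintegral_prod_right' (f := fun q : (ℝ × ℝ) × ℝ =>
        (Set.Ioc (max q.1.1 q.1.2) 1).indicator (fun u => R b u u) q.2) ?_
      have : (fun q : (ℝ × ℝ) × ℝ =>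
        (Set.Ioc (max q.1.1 q.1.2) 1).indicator (fun u => R b u u) q.2) =
        Set.indicator {q : (ℝ × ℝ) × ℝ | max q.1.1 q.1.2 < q.2 ∧ q.2 ≤ 1}
          (fun q => R b q.2 q.2) := by
        funext q; simp only [Set.indicator, Set.mem_Ioc, Set.mem_ofPred_eq]
      rw [this]
      refine Measurable.indicator (ih.comp (f := fun q : (ℝ × ℝ) × ℝ => (q.2, q.2)) (by fun_prop)) ?_
      exact ms2 (by fun_prop) (by fun_prop) (by fun_prop) (by fun_prop)

lemma R_diag_meas (b : List Bool) : Measurable (fun u : ℝ => R b u u) :=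
  (R_meas b).comp (f := fun u : ℝ => (u, u)) (by fun_prop)

lemma hasDeriv_sub (s : ℝ) (a : ℕ) (u : ℝ) :
    HasDerivAt (fun u : ℝ => (u - s) ^ (a + 1) / ((a + 1).factorial : ℝ)) ((u - s) ^ a / (a.factorial : ℝ)) u := by
  have h := (((hasDerivAt_id u).sub_const s).pow (a + 1)).div_const ((a + 1).factorial : ℝ)
  refine h.congr_deriv ?_
  rw [Nat.factorial_succ]
  have : (a.factorial : ℝ) ≠ 0 := by positivity
  simp only [id, Nat.add_sub_cancel, mul_one]
  push_cast
  field_simp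

lemma hasDeriv_rev (x : ℝ) (a : ℕ) (u : ℝ) :
    HasDerivAt (fun u : ℝ => (x - u) ^ (a + 1) / ((a + 1).factorial : ℝ)) (-((x - u) ^ a / (a.factorial : ℝ))) u := by
  have h := (((hasDerivAt_id u).const_sub x).pow (a + 1)).div_const ((a + 1).factorial : ℝ)
  refine h.congr_deriv ?_
  rw [Nat.factorial_succ]
  have : (a.factorial : ℝ) ≠ 0 := by positivity
  simp only [id, Nat.add_sub_cancel]
  push_cast
  field_simp

lemma beta_real (s x : ℝ) (a : ℕ) : ∀ b : ℕ,
    ∫ u in s..x, (u - s) ^ a / (a.factorial : ℝ) * ((x - u) ^ b / (b.factorial : ℝ)) =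
      (x - s) ^ (a + b + 1) / ((a + b + 1).factorial : ℝ) := by
  induction a with
  | zero =>
    intro b
    have h := intervalIntegral.integral_eq_sub_of_hasDerivAt (a := s) (b := x)
      (f := fun u : ℝ => -((x - u) ^ (b + 1) / ((b + 1).factorial : ℝ)))
      (f' := fun u => (u - s) ^ 0 / (Nat.factorial 0 : ℝ) * ((x - u) ^ b / (b.factorial : ℝ)))
      (fun u _ => by
        refine (hasDeriv_rev x b u).neg.congr_deriv ?_
        simp)
      (Continuous.intervalIntegrable (by fun_prop) _ _)
    rw [h]; simp
  | succ a ih =>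
    intro b
    have h := intervalIntegral.integral_eq_sub_of_hasDerivAt (a := s) (b := x)
      (f := fun u : ℝ => (u - s) ^ (a + 1) / ((a + 1).factorial : ℝ) * ((x - u) ^ (b + 1) / ((b + 1).factorial : ℝ)))
      (f' := fun u => (u - s) ^ a / (a.factorial : ℝ) * ((x - u) ^ (b + 1) / ((b + 1).factorial : ℝ)) -
        (u - s) ^ (a + 1) / ((a + 1).factorial : ℝ) * ((x - u) ^ b / (b.factorial : ℝ)))
      (fun u _ => by
        refine ((hasDeriv_sub s a u).mul (hasDeriv_rev x b u)).congr_deriv ?_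
        ring)
      (Continuous.intervalIntegrable (by fun_prop) _ _)
    rw [intervalIntegral.integral_sub (Continuous.intervalIntegrable (by fun_prop) _ _)
      (Continuous.intervalIntegrable (by fun_prop) _ _), ih (b + 1)] at h
    have e : a + (b + 1) + 1 = a + 1 + b + 1 := by ring
    rw [e] at h
    simp at h
    linarith

lemma beta_ennreal (s x : ℝ) (hsx : s ≤ x) (a b : ℕ) :
    ∫⁻ u in Set.Ioc s x, ENNReal.ofReal ((u - s) ^ a / (a.factorial : ℝ)) *
      ENNReal.ofReal ((x - u) ^ b / (b.factorial : ℝ)) =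
      ENNReal.ofReal ((x - s) ^ (a + b + 1) / ((a + b + 1).factorial : ℝ)) := by
  rw [← beta_real, intervalIntegral.integral_of_le hsx, ofReal_integral_eq_lintegral_ofReal]
  · refine setLIntegral_congr_fun measurableSet_Ioc fun u hu => ?_
    have : 0 ≤ u - s := by linarith [hu.1]
    exact (ENNReal.ofReal_mul (by positivity)).symm
  · refine (intervalIntegrable_iff_integrableOn_Ioc_of_le hsx).1 ?_
    exact Continuous.intervalIntegrable (by fun_prop) _ _
  · refine (ae_restrict_iff' measurableSet_Ioc).2 (Eventually.of_forall fun u hu => ?_)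
    have : 0 ≤ u - s := by linarith [hu.1]
    have : 0 ≤ x - u := by linarith [hu.2]
    change 0 ≤ (u - s) ^ a / (a.factorial : ℝ) * ((x - u) ^ b / (b.factorial : ℝ))
    positivity

lemma pow_ennreal (s x : ℝ) (hsx : s ≤ x) (b : ℕ) :
    ∫⁻ u in Set.Ioc s x, ENNReal.ofReal ((x - u) ^ b / (b.factorial : ℝ)) =
      ENNReal.ofReal ((x - s) ^ (b + 1) / ((b + 1).factorial : ℝ)) := by
  have := beta_ennreal s x hsx 0 b
  simpa using this

lemma swap_lemma (c t : ℝ) (F : ℝ → ℝ → ℝ≥0∞) (hF : Measurable (Function.uncurry F)) :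
    ∫⁻ x in Set.Ioc t 1, ∫⁻ u in Set.Ioc (max c x) 1, F x u =
      ∫⁻ u in Set.Ioc (max c t) 1, ∫⁻ x in Set.Ioc t u, F x u := by
  have h2 : ∀ u, ∫⁻ x in Set.Ioc t u, F x u = ∫⁻ x in Set.Ioo t u, F x u := fun u =>
    setLIntegral_congr Ioo_ae_eq_Ioc.symm
  simp_rw [h2]
  have e1 : ∀ x : ℝ, (Set.Ioc t 1).indicator (fun x => ∫⁻ u, (Set.Ioc (max c x) 1).indicator (fun u => F x u) u) x
     = ∫⁻ u, (if t < x ∧ c < u ∧ x < u ∧ u ≤ 1 then F x u else 0) := by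
    intro x
    by_cases hx : x ∈ Set.Ioc t 1
    · rw [Set.indicator_of_mem hx]
      congr 1; funext u
      simp only [Set.indicator, Set.mem_Ioc, max_lt_iff]
      simp only [Set.mem_Ioc] at hx
      congr 1
      apply propext; tauto
    · rw [Set.indicator_of_notMem hx, eq_comm]
      refine (lintegral_congr fun u => ?_).trans lintegral_zero
      refine if_neg ?_
      rintro ⟨h1, h2, h3, h4⟩
      exact hx ⟨h1, by linarith⟩
  have e2 : ∀ u : ℝ, (Set.Ioc (max c t) 1).indicator (fun u => ∫⁻ x, (Set.Ioo t u).indicator (fun x => F x u) x) u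
     = ∫⁻ x, (if t < x ∧ c < u ∧ x < u ∧ u ≤ 1 then F x u else 0) := by
    intro u
    by_cases hx : u ∈ Set.Ioc (max c t) 1
    · rw [Set.indicator_of_mem hx]
      congr 1; funext x
      simp only [Set.indicator, Set.mem_Ioo]
      simp only [Set.mem_Ioc, max_lt_iff] at hx
      congr 1
      apply propext; tauto
    · rw [Set.indicator_of_notMem hx, eq_comm]
      refine (lintegral_congr fun x => ?_).trans lintegral_zero
      refine if_neg ?_
      rintro ⟨h1, h2, h3, h4⟩
      exact hx ⟨max_lt h2 (by linarith), h4⟩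
  simp_rw [← lintegral_indicator measurableSet_Ioc, ← lintegral_indicator measurableSet_Ioo]
  simp_rw [e1, e2]
  rw [lintegral_lintegral_swap]
  refine Measurable.aemeasurable ?_
  refine Measurable.ite ?_ hF measurable_const
  exact ms4 (by fun_prop) (by fun_prop) (by fun_prop) (by fun_prop) (by fun_prop) (by fun_prop) (by fun_prop) (by fun_prop)

lemma R_block (b : List Bool) (l : ℕ) : ∀ s t : ℝ, R (List.replicate l false ++ true :: b) s t =
    ∫⁻ u in Set.Ioc (max s t) 1, ENNReal.ofReal ((u - s) ^ l / (l.factorial : ℝ)) *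
      (ENNReal.ofReal ((u - t) ^ l / (l.factorial : ℝ)) * R b u u) := by
  induction l with
  | zero => intro s t; simp [R]
  | succ l ih =>
    intro s t
    rw [List.replicate_succ, List.cons_append, R]
    simp_rw [ih]
    have hm := R_diag_meas b
    have h1 : ∀ s', ∫⁻ v in Set.Ioc t 1, ∫⁻ u in Set.Ioc (max s' v) 1,
        ENNReal.ofReal ((u - s') ^ l / (l.factorial : ℝ)) *
        (ENNReal.ofReal ((u - v) ^ l / (l.factorial : ℝ)) * R b u u) =
        ∫⁻ u in Set.Ioc (max t s') 1, ENNReal.ofReal ((u - s') ^ l / (l.factorial : ℝ)) *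
        (ENNReal.ofReal ((u - t) ^ (l + 1) / ((l + 1).factorial : ℝ)) * R b u u) := by
      intro s'
      rw [swap_lemma s' t (fun v u => ENNReal.ofReal ((u - s') ^ l / (l.factorial : ℝ)) *
        (ENNReal.ofReal ((u - v) ^ l / (l.factorial : ℝ)) * R b u u))
        (by
          have : Measurable (fun p : ℝ × ℝ => R b p.2 p.2) := hm.comp (f := fun p : ℝ × ℝ => p.2) (by fun_prop)
          unfold Function.uncurry
          refine Measurable.mul (by fun_prop) (Measurable.mul (by fun_prop) this)), max_comm s' t]
      refine setLIntegral_congr_fun measurableSet_Ioc fun u hu => ?_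
      have hu1 : t < u := (max_lt_iff.1 hu.1).1
      rw [lintegral_const_mul _ (by fun_prop), lintegral_mul_const _ (by fun_prop),
        pow_ennreal t u hu1.le]
    simp_rw [h1]
    rw [swap_lemma t s (fun v u => ENNReal.ofReal ((u - v) ^ l / (l.factorial : ℝ)) *
        (ENNReal.ofReal ((u - t) ^ (l + 1) / ((l + 1).factorial : ℝ)) * R b u u))
        (by
          have : Measurable (fun p : ℝ × ℝ => R b p.2 p.2) := hm.comp (f := fun p : ℝ × ℝ => p.2) (by fun_prop)
          unfold Function.uncurry
          refine Measurable.mul (by fun_prop) (Measurable.mul (by fun_prop) this)), max_comm t s]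
    refine setLIntegral_congr_fun measurableSet_Ioc fun u hu => ?_
    have hu1 : s < u := (max_lt_iff.1 hu.1).1
    rw [lintegral_mul_const _ (by fun_prop), pow_ennreal s u hu1.le]

lemma R_false (l : ℕ) : ∀ s t : ℝ, s ≤ 1 → t ≤ 1 → R (List.replicate l false) s t =
    ENNReal.ofReal ((1 - s) ^ l / (l.factorial : ℝ)) * ENNReal.ofReal ((1 - t) ^ l / (l.factorial : ℝ)) := by
  induction l with
  | zero => intro s t _ _; simp [R]
  | succ l ih =>
    intro s t hs ht
    rw [List.replicate_succ, R]
    have h1 : ∀ u ∈ Set.Ioc s 1, ∫⁻ v in Set.Ioc t 1, R (List.replicate l false) u v =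
        ENNReal.ofReal ((1 - u) ^ l / (l.factorial : ℝ)) *
        ENNReal.ofReal ((1 - t) ^ (l + 1) / ((l + 1).factorial : ℝ)) := by
      intro u hu
      rw [setLIntegral_congr_fun measurableSet_Ioc (fun v hv => ih u v hu.2 hv.2),
        lintegral_const_mul _ (by fun_prop), pow_ennreal t 1 ht]
    rw [setLIntegral_congr_fun measurableSet_Ioc h1, lintegral_mul_const _ (by fun_prop),
      pow_ennreal s 1 hs]

end RandomHypercube


namespace RandomHypercube
open scoped ENNReal

lemma sq_fact (x : ℝ) (hx : 0 ≤ x) (j : ℕ) :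
    ((G j).card : ℝ≥0∞) * (ENNReal.ofReal (x ^ j / (j.factorial : ℝ)) * ENNReal.ofReal (x ^ j / (j.factorial : ℝ))) =
      ENNReal.ofReal (hh j) * ENNReal.ofReal (x ^ (2 * j) / ((2 * j).factorial : ℝ)) := by
  rw [← ENNReal.ofReal_mul (by positivity), ← ENNReal.ofReal_mul (hh_nonneg j),
    ← ENNReal.ofReal_natCast, ← ENNReal.ofReal_mul (by positivity)]
  congr 1
  unfold hh
  have h := Nat.choose_mul_factorial_mul_factorial (n := 2 * j) (k := j) (by omega)
  have e : 2 * j - j = j := by omega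
  rw [e] at h
  rw [← h]
  have h1 : (j.factorial : ℝ) ≠ 0 := by positivity
  have h2 : ((2 * j).choose j : ℝ) ≠ 0 := by
    have := Nat.choose_pos (n := 2 * j) (k := j) (by omega)
    positivity
  push_cast
  rw [show x ^ (2 * j) = x ^ j * x ^ j by rw [two_mul, pow_add]]
  field_simp

lemma coeff_HS_succ (m k : ℕ) : PowerSeries.coeff m (HS ^ (k + 2)) =
    ∑ j ∈ Finset.range (m + 1), hh j * PowerSeries.coeff (m - j) (HS ^ (k + 1)) := by
  rw [pow_succ' _ (k + 1), PowerSeries.coeff_mul, Finset.Nat.sum_antidiagonal_eq_sum_range_succ_mk]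
  simp [HS]

lemma Psi (n : ℕ) : ∀ s : ℝ, s ≤ 1 → ∑ σ : Equiv.Perm (Fin n), R (pt σ) s s =
    ∑ k ∈ Finset.range (n + 1), ENNReal.ofReal (PowerSeries.coeff (n - k) (HS ^ (k + 1))) *
      ENNReal.ofReal ((1 - s) ^ (k + 2 * (n - k)) / ((k + 2 * (n - k)).factorial : ℝ)) := by
  induction n using Nat.strong_induction_on with
  | _ n ih =>
  intro s hs
  rw [sum_rec n (fun l => R l s s), R_false n s s hs hs, nsmul_eq_mul, sq_fact _ (by linarith)]
  rw [Finset.sum_range_succ' _ n, add_comm]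
  congr 1
  · have h1 : ∀ j ∈ Finset.range n, (G j).card • ∑ β : Equiv.Perm (Fin (n - 1 - j)),
        R (List.replicate j false ++ true :: pt β) s s =
        ∑ k ∈ Finset.range (n - j), ENNReal.ofReal (hh j) * ENNReal.ofReal (PowerSeries.coeff (n - (k + 1) - j) (HS ^ (k + 1))) *
          ENNReal.ofReal ((1 - s) ^ ((k + 1) + 2 * (n - (k + 1))) / (((k + 1) + 2 * (n - (k + 1))).factorial : ℝ)) := by
      intro j hj
      have hj' := Finset.mem_range.1 hj
      have e0 : n - 1 - j + 1 = n - j := by omega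
      simp_rw [R_block, max_self]
      rw [← lintegral_finsetSum _ (fun β _ => by have := R_diag_meas (pt β); fun_prop)]
      have h2 : ∀ u ∈ Set.Ioc s 1, ∑ β : Equiv.Perm (Fin (n - 1 - j)),
          ENNReal.ofReal ((u - s) ^ j / (j.factorial : ℝ)) *
          (ENNReal.ofReal ((u - s) ^ j / (j.factorial : ℝ)) * R (pt β) u u) =
          ∑ k ∈ Finset.range (n - j), ENNReal.ofReal (PowerSeries.coeff (n - 1 - j - k) (HS ^ (k + 1))) *
          (ENNReal.ofReal ((u - s) ^ j / (j.factorial : ℝ)) * ENNReal.ofReal ((u - s) ^ j / (j.factorial : ℝ)) *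
            ENNReal.ofReal ((1 - u) ^ (k + 2 * (n - 1 - j - k)) / ((k + 2 * (n - 1 - j - k)).factorial : ℝ))) := by
        intro u hu
        rw [← Finset.mul_sum, ← Finset.mul_sum, ih (n - 1 - j) (by omega) u hu.2, e0, Finset.mul_sum, Finset.mul_sum]
        refine Finset.sum_congr rfl fun k _ => ?_
        ring
      rw [setLIntegral_congr_fun measurableSet_Ioc h2, lintegral_finsetSum _ (fun k _ => by fun_prop),
        nsmul_eq_mul, Finset.mul_sum]
      refine Finset.sum_congr rfl fun k hk => ?_
      have hk' := Finset.mem_range.1 hk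
      rw [lintegral_const_mul _ (by fun_prop), mul_left_comm, ← lintegral_const_mul _ (by fun_prop)]
      have h3 : ∀ u ∈ Set.Ioc s 1, ((G j).card : ℝ≥0∞) * (ENNReal.ofReal ((u - s) ^ j / (j.factorial : ℝ)) * ENNReal.ofReal ((u - s) ^ j / (j.factorial : ℝ)) *
            ENNReal.ofReal ((1 - u) ^ (k + 2 * (n - 1 - j - k)) / ((k + 2 * (n - 1 - j - k)).factorial : ℝ))) =
          ENNReal.ofReal (hh j) * (ENNReal.ofReal ((u - s) ^ (2 * j) / ((2 * j).factorial : ℝ)) *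
            ENNReal.ofReal ((1 - u) ^ (k + 2 * (n - 1 - j - k)) / ((k + 2 * (n - 1 - j - k)).factorial : ℝ))) := by
        intro u hu
        rw [← mul_assoc, sq_fact _ (by linarith [hu.1]), mul_assoc]
      rw [setLIntegral_congr_fun measurableSet_Ioc h3, lintegral_const_mul _ (by fun_prop), beta_ennreal s 1 hs]
      have e1 : 2 * j + (k + 2 * (n - 1 - j - k)) + 1 = (k + 1) + 2 * (n - (k + 1)) := by omega
      have e2 : n - 1 - j - k = n - (k + 1) - j := by omega
      rw [e1, e2]
      ring
    rw [Finset.sum_congr rfl h1]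
    rw [Finset.sum_comm' (t' := Finset.range n) (s' := fun k => Finset.range (n - k))
      (by intro x y; simp only [Finset.mem_range]; omega)]
    refine Finset.sum_congr rfl fun k hk => ?_
    have hk' := Finset.mem_range.1 hk
    rw [← Finset.sum_mul, coeff_HS_succ]
    have e3 : n - (k + 1) + 1 = n - k := by omega
    rw [e3, ENNReal.ofReal_sum_of_nonneg (fun j _ => mul_nonneg (hh_nonneg j) (HS_nonneg _ _))]
    congr 1
    exact Finset.sum_congr rfl fun j _ => (ENNReal.ofReal_mul (hh_nonneg j)).symm
  · simp [HS]

lemma Psi_real (n : ℕ) : (n.factorial : ℝ) * (∑ σ : Equiv.Perm (Fin n), R (pt σ) 0 0).toReal =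
    ∑ k ∈ Finset.range (n + 1), TT k (n - k) := by
  rw [Psi n 0 zero_le_one, ENNReal.toReal_sum (fun k _ => ENNReal.mul_ne_top ENNReal.ofReal_ne_top ENNReal.ofReal_ne_top),
    Finset.mul_sum]
  refine Finset.sum_congr rfl fun k hk => ?_
  have hk' := Finset.mem_range.1 hk
  rw [ENNReal.toReal_mul, ENNReal.toReal_ofReal (HS_nonneg _ _), ENNReal.toReal_ofReal (by positivity)]
  unfold TT
  have e : k + (n - k) = n := by omega
  rw [e]
  simp
  ring

end RandomHypercube


namespace RandomHypercube
open scoped ENNReal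

noncomputable def unif : Measure ℝ := (volume : Measure ℝ).restrict (Set.Ioc 0 1)

instance : IsProbabilityMeasure unif := ⟨by simp [unif]⟩

noncomputable def nu : Bool → Measure (ℝ × ℝ)
  | true => unif.map (fun x => (x, x))
  | false => unif.prod unif

instance (b : Bool) : IsProbabilityMeasure (nu b) := by
  cases b
  · unfold nu; infer_instance
  · exact Measure.isProbabilityMeasure_map (by fun_prop)

def Ev (n : ℕ) (s t : ℝ) : Set (Fin n → ℝ × ℝ) :=
  {p | StrictMono (fun j => (p j).1) ∧ StrictMono (fun j => (p j).2) ∧ ∀ j, s < (p j).1 ∧ t < (p j).2}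

lemma strictMono_meas {α : Type*} [MeasurableSpace α] {n : ℕ} (f : α → Fin n → ℝ)
    (hf : ∀ j, Measurable (fun x => f x j)) : MeasurableSet {x | StrictMono (f x)} := by
  have : {x | StrictMono (f x)} = ⋂ i, ⋂ j, ⋂ (_ : i < j), {x | f x i < f x j} := by
    ext x; simp [StrictMono]
  rw [this]
  exact MeasurableSet.iInter fun i => MeasurableSet.iInter fun j => MeasurableSet.iInter fun _ =>
    measurableSet_lt (hf i) (hf j)

lemma Ev_meas (n : ℕ) (s t : ℝ) : MeasurableSet (Ev n s t) := by
  have h : MeasurableSet {p : Fin n → ℝ × ℝ | ∀ j, s < (p j).1 ∧ t < (p j).2} := by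
    have : {p : Fin n → ℝ × ℝ | ∀ j, s < (p j).1 ∧ t < (p j).2} =
      ⋂ j, ({p | s < (p j).1} ∩ {p | t < (p j).2}) := by ext x; simp
    rw [this]
    exact MeasurableSet.iInter fun j => (measurableSet_lt (by fun_prop) (by fun_prop)).inter
      (measurableSet_lt (by fun_prop) (by fun_prop))
  exact (strictMono_meas _ (by fun_prop)).inter ((strictMono_meas _ (by fun_prop)).inter h)

lemma sm_cons {n : ℕ} (x : ℝ) (f : Fin n → ℝ) :
    StrictMono (Fin.cons x f : Fin (n + 1) → ℝ) ↔ (∀ j, x < f j) ∧ StrictMono f := by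
  constructor
  · intro h
    refine ⟨fun j => ?_, fun i j hij => ?_⟩
    · simpa using h (Fin.succ_pos j)
    · simpa using h (Fin.succ_lt_succ_iff.2 hij)
  · rintro ⟨h1, h2⟩ i j hij
    induction j using Fin.cases with
    | zero => exact absurd hij (Fin.not_lt_zero i)
    | succ j =>
      induction i using Fin.cases with
      | zero => simpa using h1 j
      | succ i => simpa using h2 (Fin.succ_lt_succ_iff.1 hij)

lemma Ev_cons (n : ℕ) (s t : ℝ) (x : ℝ × ℝ) (q : Fin n → ℝ × ℝ) :
    (Fin.cons x q : Fin (n + 1) → ℝ × ℝ) ∈ Ev (n + 1) s t ↔ (s < x.1 ∧ t < x.2) ∧ q ∈ Ev n x.1 x.2 := by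
  unfold Ev
  simp only [Set.mem_ofPred_eq]
  have e1 : (fun j => ((Fin.cons x q : Fin (n + 1) → ℝ × ℝ) j).1) = Fin.cons x.1 (fun j => (q j).1) := by
    funext j; induction j using Fin.cases <;> simp
  have e2 : (fun j => ((Fin.cons x q : Fin (n + 1) → ℝ × ℝ) j).2) = Fin.cons x.2 (fun j => (q j).2) := by
    funext j; induction j using Fin.cases <;> simp
  rw [e1, e2, sm_cons, sm_cons, Fin.forall_fin_succ]
  simp only [Fin.cons_zero, Fin.cons_succ]
  constructor
  · rintro ⟨⟨a, b⟩, ⟨c, d⟩, e, f⟩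
    exact ⟨e, b, d, fun j => ⟨a j, c j⟩⟩
  · rintro ⟨e, b, d, f⟩
    exact ⟨⟨fun j => (f j).1, b⟩, ⟨fun j => (f j).2, d⟩, e, fun j => ⟨e.1.trans (f j).1, e.2.trans (f j).2⟩⟩

lemma ind_lemma (c : ℝ) (hc : 0 ≤ c) (g : ℝ → ℝ≥0∞) :
    ∫⁻ u, (Set.Ioi c).indicator g u ∂unif = ∫⁻ u in Set.Ioc c 1, g u := by
  rw [lintegral_indicator measurableSet_Ioi, unif, Measure.restrict_restrict measurableSet_Ioi]
  congr 2
  ext u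
  simp only [Set.mem_inter_iff, Set.mem_Ioi, Set.mem_Ioc]
  constructor
  · rintro ⟨a, b, c⟩; exact ⟨a, c⟩
  · rintro ⟨a, b⟩; exact ⟨a, by linarith, b⟩

lemma pi_R (n : ℕ) : ∀ (b : Fin n → Bool) (s t : ℝ), 0 ≤ s → 0 ≤ t →
    Measure.pi (fun j => nu (b j)) (Ev n s t) = R (List.ofFn b) s t := by
  induction n with
  | zero =>
    intro b s t _ _
    have : Ev 0 s t = Set.univ := by
      ext p; simp [Ev, StrictMono]
    rw [this]; simp [R]
  | succ n ih =>
    intro b s t hs ht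
    have mp := (measurePreserving_piFinSuccAbove (fun j => nu (b j)) 0).symm
    rw [← mp.measure_preimage (Ev_meas _ _ _).nullMeasurableSet, Measure.prod_apply
      (mp.measurable (Ev_meas _ _ _))]
    have h1 : ∀ x : ℝ × ℝ, (Measure.pi fun j => nu (b (Fin.succAbove 0 j))) (Prod.mk x ⁻¹'
        ((MeasurableEquiv.piFinSuccAbove (fun _ : Fin (n + 1) => ℝ × ℝ) 0).symm ⁻¹' Ev (n + 1) s t)) =
        (Set.Ioi s).indicator (fun u => (Set.Ioi t).indicator (fun v => R (List.ofFn fun j => b j.succ) u v) x.2) x.1 := by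
      intro x
      have e : (Prod.mk x ⁻¹'
        ((MeasurableEquiv.piFinSuccAbove (fun _ : Fin (n + 1) => ℝ × ℝ) 0).symm ⁻¹' Ev (n + 1) s t)) =
        {q | (s < x.1 ∧ t < x.2) ∧ q ∈ Ev n x.1 x.2} := by
        ext q
        simp only [Set.mem_preimage, Set.mem_ofPred_eq]
        rw [← Ev_cons]
        simp [MeasurableEquiv.piFinSuccAbove, Fin.insertNthEquiv]
      rw [e]
      by_cases h1 : s < x.1
      · rw [Set.indicator_of_mem (Set.mem_Ioi.2 h1)]
        by_cases h2 : t < x.2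
        · rw [Set.indicator_of_mem (Set.mem_Ioi.2 h2), ← ih _ _ _ (by linarith) (by linarith)]
          simp [h1, h2]
        · rw [Set.indicator_of_notMem (by simpa using h2)]
          simp [h2]
      · rw [Set.indicator_of_notMem (by simpa using h1)]
        simp [h1]
    rw [lintegral_congr h1, List.ofFn_succ]
    have hm : Measurable (fun x : ℝ × ℝ => (Set.Ioi s).indicator (fun u => (Set.Ioi t).indicator (fun v => R (List.ofFn fun j => b j.succ) u v) x.2) x.1) := by
      have : (fun x : ℝ × ℝ => (Set.Ioi s).indicator (fun u => (Set.Ioi t).indicator (fun v => R (List.ofFn fun j => b j.succ) u v) x.2) x.1)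
        = Set.indicator (Set.Ioi s ×ˢ Set.Ioi t) (fun x : ℝ × ℝ => R (List.ofFn fun j => b j.succ) x.1 x.2) := by
        funext x
        by_cases h1 : s < x.1 <;> by_cases h2 : t < x.2 <;> simp [Set.indicator, h1, h2]
      rw [this]
      exact (R_meas _).indicator (measurableSet_Ioi.prod measurableSet_Ioi)
    cases b 0
    · rw [nu, lintegral_prod _ hm.aemeasurable, R]
      dsimp only
      rw [← ind_lemma s hs]
      refine lintegral_congr fun u => ?_
      by_cases h1 : s < u
      · simp only [Set.indicator_of_mem (Set.mem_Ioi.2 h1)]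
        exact ind_lemma t ht _
      · simp only [Set.indicator_of_notMem (show u ∉ Set.Ioi s by simpa using h1)]
        simp
    · rw [nu, lintegral_map hm (by fun_prop), R]
      dsimp only
      rw [← ind_lemma (max s t) (le_max_of_le_left hs)]
      refine lintegral_congr fun u => ?_
      by_cases h1 : s < u <;> by_cases h2 : t < u <;> simp [Set.indicator, h1, h2]

lemma law {E : Type*} [Fintype E] [DecidableEq E] {n : ℕ} (a b : Fin n → E) (lev : E → ℕ)
    (ha : ∀ j, lev (a j) = j) (hb : ∀ j, lev (b j) = j) :
    (Measure.pi (fun _ : E => unif)).map (fun ω j => (ω (a j), ω (b j))) =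
      Measure.pi (fun j => nu (decide (a j = b j))) := by
  symm
  refine Measure.pi_eq_generateFrom (fun _ => generateFrom_prod) (fun _ => isPiSystem_prod)
    (fun j => ?_) ?_
  · exact {
      set := fun _ => Set.univ
      set_mem := fun _ => ⟨Set.univ, by simp, Set.univ, by simp, Set.univ_prod_univ⟩
      finite := fun _ => measure_lt_top _ _
      spanning := Set.iUnion_const _ }
  · intro st hst
    choose S hS T hT hST using hst
    have hS' : ∀ j, MeasurableSet (S j) := hS
    have hT' : ∀ j, MeasurableSet (T j) := hT
    obtain rfl : (fun j => S j ×ˢ T j) = st := funext hST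
    rw [Measure.map_apply (by fun_prop) (MeasurableSet.univ_pi fun j => (hS' j).prod (hT' j))]
    let C : E → Set ℝ := fun e => {x | ∀ j, (a j = e → x ∈ S j) ∧ (b j = e → x ∈ T j)}
    have e1 : (fun (ω : E → ℝ) j => (ω (a j), ω (b j))) ⁻¹' (Set.univ.pi fun j => S j ×ˢ T j) = Set.univ.pi C := by
      ext ω
      simp only [Set.mem_preimage, Set.mem_univ_pi, Set.mem_prod, C, Set.mem_ofPred_eq]
      constructor
      · intro h e j
        exact ⟨fun h' => h' ▸ (h j).1, fun h' => h' ▸ (h j).2⟩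
      · intro h j
        exact ⟨(h (a j) j).1 rfl, (h (b j) j).2 rfl⟩
    rw [e1, Measure.pi_pi]
    have e2 : ∏ e, unif (C e) = ∏ j : Fin n, ∏ e ∈ ({a j, b j} : Finset E), unif (C e) := by
      rw [← Finset.prod_biUnion]
      · symm
        apply Finset.prod_subset (Finset.subset_univ _)
        intro e _ he
        have : C e = Set.univ := by
          ext x
          simp only [C, Set.mem_ofPred_eq, Set.mem_univ, iff_true]
          intro j
          refine ⟨fun h => absurd ?_ he, fun h => absurd ?_ he⟩ <;>
          · simp only [Finset.mem_biUnion]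
            exact ⟨j, Finset.mem_univ _, by simp [h]⟩
        rw [this, measure_univ]
      · intro i _ j _ hij
        rw [Function.onFun, Finset.disjoint_left]
        intro e h1 h2
        apply hij
        have l1 : lev e = i := by
          rcases Finset.mem_insert.1 h1 with h | h
          · rw [h, ha]
          · rw [Finset.mem_singleton.1 h, hb]
        have l2 : lev e = j := by
          rcases Finset.mem_insert.1 h2 with h | h
          · rw [h, ha]
          · rw [Finset.mem_singleton.1 h, hb]
        exact Fin.ext (l1.symm.trans l2)
    rw [e2]
    refine Finset.prod_congr rfl fun j _ => ?_
    have ca : C (a j) = {x | x ∈ S j ∧ (b j = a j → x ∈ T j)} := by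
      ext x
      simp only [C, Set.mem_ofPred_eq]
      constructor
      · intro h; exact ⟨(h j).1 rfl, (h j).2⟩
      · intro h i
        refine ⟨fun h' => ?_, fun h' => ?_⟩
        · have : i = j := Fin.ext (by rw [← ha i, h', ha])
          subst this; exact h.1
        · have : i = j := Fin.ext (by rw [← hb i, h', ha])
          subst this; exact h.2 h'
    have cb : C (b j) = {x | (a j = b j → x ∈ S j) ∧ x ∈ T j} := by
      ext x
      simp only [C, Set.mem_ofPred_eq]
      constructor
      · intro h; exact ⟨(h j).1, (h j).2 rfl⟩
      · intro h i
        refine ⟨fun h' => ?_, fun h' => ?_⟩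
        · have : i = j := Fin.ext (by rw [← ha i, h', hb])
          subst this; exact h.1 h'
        · have : i = j := Fin.ext (by rw [← hb i, h', hb])
          subst this; exact h.2
    by_cases h : a j = b j
    · rw [decide_eq_true h, nu, Measure.map_apply (by fun_prop) ((hS' j).prod (hT' j))]
      have : ({a j, b j} : Finset E) = {a j} := by simp [h]
      rw [this, Finset.prod_singleton, ca]
      congr 1
      ext x
      simp [h]
    · rw [decide_eq_false h, nu, Measure.prod_prod, Finset.prod_pair h, ca, cb]
      have h' : b j ≠ a j := Ne.symm h
      simp [h, h']

lemma cube_eq (n : ℕ) : cubeMeasure n = Measure.pi (fun _ : EdgeIdx n => unif) := by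
  unfold cubeMeasure unif
  rw [Measure.restrict_congr_set Ioc_ae_eq_Icc]

lemma pathEdge_lev (n : ℕ) (σ : Equiv.Perm (Fin n)) (j : Fin n) : (pathEdge n σ j).1.card = j := by
  unfold pathEdge initSeg
  rw [Finset.card_image_of_injective _ σ.injective]
  have h : (Finset.univ.filter fun i => i < j) = Finset.Iio j := by ext i; simp
  rw [h, Fin.card_Iio]

lemma acc_meas (n : ℕ) (σ : Equiv.Perm (Fin n)) : MeasurableSet {ω | Accessible n σ ω} :=
  strictMono_meas _ (by fun_prop)

lemma pair_prob (n : ℕ) (σ τ : Equiv.Perm (Fin n)) :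
    cubeMeasure n ({ω | Accessible n σ ω} ∩ {ω | Accessible n τ ω}) = R (pt (σ⁻¹ * τ)) 0 0 := by
  rw [← pat_eq, pat, ← pi_R n _ 0 0 le_rfl le_rfl, ← law (pathEdge n σ) (pathEdge n τ) (fun e => e.1.card)
    (pathEdge_lev n σ) (pathEdge_lev n τ), Measure.map_apply (by fun_prop) (Ev_meas _ _ _), cube_eq]
  refine measure_congr ?_
  have hpos : ∀ᵐ ω ∂(Measure.pi (fun _ : EdgeIdx n => unif)), ∀ e, 0 < ω e := by
    rw [ae_all_iff]
    intro e
    have h0 : ∀ᵐ x ∂unif, 0 < x := by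
      unfold unif
      exact (ae_restrict_iff' measurableSet_Ioc).2 (Eventually.of_forall fun u hu => hu.1)
    exact (measurePreserving_eval (fun _ : EdgeIdx n => unif) e).quasiMeasurePreserving.ae h0
  filter_upwards [hpos] with ω hω
  apply propext
  change (Accessible n σ ω ∧ Accessible n τ ω) ↔ _ ∈ Ev n 0 0
  unfold Ev Accessible
  simp only [Set.mem_ofPred_eq]
  exact ⟨fun h => ⟨h.1, h.2, fun j => ⟨hω _, hω _⟩⟩, fun h => ⟨h.1, h.2.1⟩⟩

instance (n : ℕ) : IsProbabilityMeasure (cubeMeasure n) := by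
  rw [cube_eq]; infer_instance

lemma X_eq (n : ℕ) (ω : CubeOmega n) : (X n ω : ℝ) =
    ∑ σ : Equiv.Perm (Fin n), Set.indicator {ω | Accessible n σ ω} (fun _ => (1 : ℝ)) ω := by
  classical
  unfold X
  rw [Nat.card_eq_fintype_card, Fintype.card_subtype, Finset.card_filter]
  push_cast
  refine Finset.sum_congr rfl fun σ _ => ?_
  simp [Set.indicator]

lemma second_moment (n : ℕ) : ∫ ω, ((X n ω : ℝ)) ^ 2 ∂(cubeMeasure n) =
    ∑ k ∈ Finset.range (n + 1), TT k (n - k) := by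
  have h1 : ∀ ω, ((X n ω : ℝ)) ^ 2 = ∑ σ : Equiv.Perm (Fin n), ∑ τ : Equiv.Perm (Fin n),
      Set.indicator ({ω | Accessible n σ ω} ∩ {ω | Accessible n τ ω}) (fun _ => (1 : ℝ)) ω := by
    intro ω
    rw [X_eq, sq, Finset.sum_mul_sum]
    refine Finset.sum_congr rfl fun σ _ => Finset.sum_congr rfl fun τ _ => ?_
    rw [← Set.inter_indicator_mul]
    simp
  have hm : ∀ σ τ, MeasurableSet ({ω | Accessible n σ ω} ∩ {ω | Accessible n τ ω}) := fun σ τ =>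
    (acc_meas n σ).inter (acc_meas n τ)
  have hi : ∀ σ τ, Integrable (Set.indicator ({ω | Accessible n σ ω} ∩ {ω | Accessible n τ ω}) (fun _ => (1 : ℝ)))
      (cubeMeasure n) := fun σ τ => (integrable_const 1).indicator (hm σ τ)
  simp_rw [h1]
  rw [integral_finsetSum _ (fun σ _ => integrable_finsetSum _ fun τ _ => hi σ τ), ← Psi_real]
  have h2 : ∀ σ : Equiv.Perm (Fin n), ∫ ω, ∑ τ : Equiv.Perm (Fin n),
      Set.indicator ({ω | Accessible n σ ω} ∩ {ω | Accessible n τ ω}) (fun _ => (1 : ℝ)) ω ∂(cubeMeasure n) =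
      (∑ σ : Equiv.Perm (Fin n), R (pt σ) 0 0).toReal := by
    intro σ
    rw [integral_finsetSum _ (fun τ _ => hi σ τ)]
    have h3 : ∀ τ, ∫ ω, Set.indicator ({ω | Accessible n σ ω} ∩ {ω | Accessible n τ ω}) (fun _ => (1 : ℝ)) ω ∂(cubeMeasure n) =
        (R (pt (σ⁻¹ * τ)) 0 0).toReal := by
      intro τ
      rw [integral_indicator_const _ (hm σ τ), Measure.real, pair_prob]
      simp
    simp_rw [h3]
    have hfin : ∀ ρ : Equiv.Perm (Fin n), R (pt ρ) 0 0 ≠ ∞ := by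
      intro ρ
      have := pair_prob n 1 ρ
      rw [inv_one, one_mul] at this
      rw [← this]
      exact measure_ne_top _ _
    rw [ENNReal.toReal_sum fun ρ _ => hfin ρ]
    exact Fintype.sum_equiv (Equiv.mulLeft σ⁻¹) _ _ (fun τ => rfl)
  simp_rw [h2]
  simp [Fintype.card_perm]

end RandomHypercube

open RandomHypercube in
/-- The second moment of the number of accessible direct paths converges to 5. -/
theorem secondMoment_tendsto_five :
    Tendsto (fun n : ℕ => ∫ ω, ((X n ω : ℝ)) ^ 2 ∂(cubeMeasure n)) atTop (nhds 5) := by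
  simp_rw [second_moment]
  exact total_tendsto
end

section
/- Let π be a direct path from ∅ to [n] that shares exactly s edges with the canonical path π_n and has gap vector a = (a_0, a_1, …, a_s). Then the probability that both π and π_n are accessible equals (∏_{i=0}^{s} C(2a_i, a_i)) / (2n − s)!. -/
open MeasureTheory Filter
open scoped ENNReal

namespace RandomHypercube

/-- The set of steps `j` at which the direct paths of `σ` and `σ'` use the same edge
(shared edges necessarily occur at the same level in both paths). -/
def sharedSteps (n : ℕ) (σ σ' : Equiv.Perm (Fin n)) : Finset (Fin n) :=
  Finset.univ.filter fun j => pathEdge n σ j = pathEdge n σ' j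

/-- Given the sorted list `l` of steps (levels) of the shared edges, the gap vector:
the number of edges before the first shared edge, strictly between consecutive shared
edges, and after the last shared edge. -/
def gapsOfList (n : ℕ) (l : List ℕ) : List ℕ :=
  List.zipWith (fun a b => b - a) (0 :: l.map (· + 1)) (l ++ [n])

/-- The gap vector of the direct path of `σ'` relative to that of `σ`. -/
def gapVector (n : ℕ) (σ σ' : Equiv.Perm (Fin n)) : List ℕ :=
  gapsOfList n (((sharedSteps n σ σ').sort (· ≤ ·)).map Fin.val)

/-- The number of (nontrivial) gaps between the direct paths of `σ` and `σ'`: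
the number of nonzero entries of the gap vector. -/
def numGaps (n : ℕ) (σ σ' : Equiv.Perm (Fin n)) : ℕ :=
  ((gapVector n σ σ').filter (· != 0)).length

/-- The probability that the direct paths of `σ` and `σ'` are both accessible. -/
noncomputable def pairProb (n : ℕ) (σ σ' : Equiv.Perm (Fin n)) : ℝ :=
  (cubeMeasure n {ω | Accessible n σ ω ∧ Accessible n σ' ω}).toReal

/-- `c n s g`: the sum, over all ordered pairs of direct paths sharing exactly `s`
edges with `g` gaps, of the probability that both paths are accessible. -/
noncomputable def c (n s g : ℕ) : ℝ :=
  ∑ p ∈ Finset.univ.filter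
      (fun p : Equiv.Perm (Fin n) × Equiv.Perm (Fin n) =>
        (sharedSteps n p.1 p.2).card = s ∧ numGaps n p.1 p.2 = g),
    pairProb n p.1 p.2

/-- `w m`: the number of direct paths from `∅` to `[m]` in the `m`-dimensional hypercube
that are edge-disjoint from the canonical path (the identity permutation). -/
noncomputable def w (m : ℕ) : ℕ :=
  Nat.card {σ : Equiv.Perm (Fin m) // sharedSteps m σ 1 = ∅}

end RandomHypercube

set_option linter.all false
namespace RandomHypercube
namespace Aux

section
variable {ι : Type} [Fintype ι] [DecidableEq ι]

noncomputable def U : Measure ℝ := (volume : Measure ℝ).restrict (Set.Icc 0 1)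

instance : IsProbabilityMeasure U := ⟨by simp [U]⟩

lemma U_singleton (x : ℝ) : U {x} = 0 :=
  le_antisymm ((Measure.restrict_apply_le _ _).trans (by simp)) zero_le

noncomputable def P (ι : Type) [Fintype ι] : Measure (ι → ℝ) := Measure.pi fun _ => U

instance : IsProbabilityMeasure (P ι) := by unfold P; infer_instance

lemma meas_upd (m : ι) : Measurable (fun z : ℝ × (ι → ℝ) => Function.update z.2 m z.1) := by
  refine measurable_pi_lambda _ fun i => ?_
  by_cases h : i = m
  · subst h; simpa using measurable_fst
  · simp only [Function.update_of_ne h]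
    exact (measurable_pi_apply i).comp measurable_snd

lemma map_upd (m : ι) :
    (U.prod (P ι)).map (fun z : ℝ × (ι → ℝ) => Function.update z.2 m z.1) = P ι := by
  symm
  refine Measure.pi_eq fun s hs => ?_
  rw [Measure.map_apply (meas_upd m) (MeasurableSet.univ_pi hs)]
  have : (fun z : ℝ × (ι → ℝ) => Function.update z.2 m z.1) ⁻¹' (Set.univ.pi s)
      = s m ×ˢ (Set.univ.pi (Function.update s m Set.univ)) := by
    ext z
    simp only [Set.mem_preimage, Set.mem_pi, Set.mem_univ, true_imp_iff, Set.mem_prod]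
    constructor
    · intro h
      refine ⟨by simpa using h m, fun i => ?_⟩
      by_cases hi : i = m
      · subst hi; simp
      · simpa [hi] using h i
    · rintro ⟨h1, h2⟩ i
      by_cases hi : i = m
      · subst hi; simpa using h1
      · simpa [hi] using h2 i
  rw [this, Measure.prod_prod, P, Measure.pi_pi]
  rw [← Finset.mul_prod_erase Finset.univ (fun i => U (s i)) (Finset.mem_univ m)]
  rw [← Finset.mul_prod_erase Finset.univ _ (Finset.mem_univ m)]
  simp only [Function.update_self, measure_univ, one_mul]
  congr 1
  refine Finset.prod_congr rfl fun i hi => ?_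
  rw [Function.update_of_ne (Finset.ne_of_mem_erase hi)]

lemma P_fubini (m : ι) (S : Set (ι → ℝ)) (hS : MeasurableSet S) :
    P ι S = ∫⁻ x, P ι {ω | Function.update ω m x ∈ S} ∂U := by
  conv_lhs => rw [← map_upd m]
  rw [Measure.map_apply (meas_upd m) hS, Measure.prod_apply (meas_upd m hS)]
  rfl

lemma map_eval (m : ι) : (P ι).map (fun ω => ω m) = U :=
  (measurePreserving_eval (fun _ : ι => U) m).map_eq

lemma P_eval_eq (m : ι) (x : ℝ) : P ι {ω | ω m = x} = 0 := by
  have : P ι ((fun ω => ω m) ⁻¹' {x}) = 0 := by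
    rw [← Measure.map_apply (measurable_pi_apply m) (measurableSet_singleton x), map_eval]
    exact U_singleton x
  exact this

lemma P_tie {a b : ι} (h : a ≠ b) : P ι {ω | ω a = ω b} = 0 := by
  rw [P_fubini a _ (measurableSet_eq_fun (measurable_pi_apply a) (measurable_pi_apply b))]
  simp only [Set.mem_setOf_eq, Function.update_self, Function.update_of_ne h.symm]
  have : ∀ x : ℝ, P ι {ω | x = ω b} = 0 := fun x => by
    simpa only [eq_comm] using P_eval_eq b x
  simp [this]

lemma ae_lt_one : ∀ᵐ ω ∂(P ι), ∀ m, ω m < 1 := by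
  rw [ae_all_iff]
  intro m
  have h : ∀ᵐ x ∂U, x < 1 := by
    have h1 : ∀ᵐ x ∂U, x ∈ Set.Icc (0:ℝ) 1 := ae_restrict_mem measurableSet_Icc
    have h2 : ∀ᵐ x ∂U, x ≠ 1 := by
      rw [ae_iff]; simpa using U_singleton 1
    filter_upwards [h1, h2] with x a b
    exact lt_of_le_of_ne a.2 b
  rw [← map_eval m] at h
  exact ae_of_ae_map (measurable_pi_apply m).aemeasurable h

lemma int_step (E N : ℕ) (t : ℝ) (ht0 : 0 ≤ t) (ht1 : t ≤ 1) (g : ℝ → ℝ≥0∞)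
    (hg : ∀ x, 0 ≤ x → x < t → g x = ENNReal.ofReal (E * x ^ N / N.factorial))
    (hg' : ∀ x, t ≤ x → g x = 0) :
    ∫⁻ x, g x ∂U = ENNReal.ofReal (E * t ^ (N + 1) / (N + 1).factorial) := by
  have h1 : ∫⁻ x, g x ∂U = ∫⁻ x in Set.Ico 0 t, ENNReal.ofReal (E * x ^ N / N.factorial) := by
    rw [U, ← lintegral_indicator measurableSet_Icc, ← lintegral_indicator measurableSet_Ico]
    congr 1
    ext x
    by_cases hx : x ∈ Set.Ico 0 t
    · have hx' : x ∈ Set.Icc (0:ℝ) 1 := ⟨hx.1, hx.2.le.trans ht1⟩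
      rw [Set.indicator_of_mem hx, Set.indicator_of_mem hx', hg x hx.1 hx.2]
    · rw [Set.indicator_of_notMem hx]
      by_cases hx' : x ∈ Set.Icc (0:ℝ) 1
      · rw [Set.indicator_of_mem hx']
        exact hg' x (by by_contra h; exact hx ⟨hx'.1, not_le.1 h⟩)
      · rw [Set.indicator_of_notMem hx']
  rw [h1, restrict_Ico_eq_restrict_Ioc, ← ofReal_integral_eq_lintegral_ofReal]
  · congr 1
    rw [← intervalIntegral.integral_of_le ht0]
    rw [intervalIntegral.integral_div, intervalIntegral.integral_const_mul, integral_pow]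
    rw [Nat.factorial_succ]
    push_cast
    have : (N.factorial : ℝ) ≠ 0 := by positivity
    field_simp
    simp
  · have : IntervalIntegrable (fun x : ℝ => (E * x ^ N / N.factorial : ℝ)) volume 0 t :=
      Continuous.intervalIntegrable (by fun_prop) _ _
    exact (intervalIntegrable_iff_integrableOn_Ioc_of_le ht0).1 this
  · refine (ae_restrict_iff' measurableSet_Ioc).2 (ae_of_all _ fun x hx => ?_)
    have := hx.1.le
    show (0:ℝ) ≤ _
    positivity

def A (e f : ℕ → ι) (i j : ℕ) (t : ℝ) : Set (ι → ℝ) :=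
  {ω | (∀ k l, k < l → l < i → ω (e k) < ω (e l)) ∧ (∀ k l, k < l → l < j → ω (f k) < ω (f l)) ∧
    (∀ k, k < i → ω (e k) < t) ∧ (∀ k, k < j → ω (f k) < t)}

lemma A_swap (e f : ℕ → ι) (i j : ℕ) (t : ℝ) : A e f i j t = A f e j i t := by
  ext ω; simp only [A, Set.mem_setOf_eq]; tauto

lemma A_meas (e f : ℕ → ι) (i j : ℕ) (τ : (ι → ℝ) → ℝ) (hτ : Measurable τ) :
    MeasurableSet {ω | ω ∈ A e f i j (τ ω)} := by
  have hm : ∀ a : ι, Measurable fun ω : ι → ℝ => ω a := fun a => measurable_pi_apply a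
  have h : ∀ (p : Prop) (u v : (ι → ℝ) → ℝ), Measurable u → Measurable v →
      MeasurableSet {ω | p → u ω < v ω} := by
    intro p u v hu hv
    by_cases hp : p
    · simpa [hp] using measurableSet_lt hu hv
    · simp [hp]
  have h2 : ∀ (e : ℕ → ι) i, MeasurableSet {ω : ι → ℝ | ∀ k l, k < l → l < i → ω (e k) < ω (e l)} := by
    intro e i
    simp only [Set.setOf_forall]
    refine MeasurableSet.iInter fun k => MeasurableSet.iInter fun l => MeasurableSet.iInter fun _ => 
      MeasurableSet.iInter fun _ => measurableSet_lt (hm _) (hm _)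
  have h3 : ∀ (e : ℕ → ι) i, MeasurableSet {ω : ι → ℝ | ∀ k, k < i → ω (e k) < τ ω} := by
    intro e i
    simp only [Set.setOf_forall]
    refine MeasurableSet.iInter fun k =>
      MeasurableSet.iInter fun _ => measurableSet_lt (hm _) hτ
  exact (h2 e i).inter ((h2 f j).inter ((h3 e i).inter (h3 f j)))

def Q (e f : ℕ → ι) (i j : ℕ) (E N : ℕ) : Prop :=
  ∀ t : ℝ, 0 ≤ t → t ≤ 1 → P ι (A e f i j t) = ENNReal.ofReal (E * t ^ N / N.factorial)

lemma Q_swap {e f : ℕ → ι} {i j E N : ℕ} (h : Q e f i j E N) : Q f e j i E N := by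
  intro t h0 h1; rw [A_swap]; exact h t h0 h1

/-- The top piece. -/
def T (e f : ℕ → ι) (i j : ℕ) (m : ι) (t : ℝ) : Set (ι → ℝ) :=
  {ω | ω m < t} ∩ {ω | ω ∈ A e f i j (ω m)}

lemma T_meas (e f : ℕ → ι) (i j : ℕ) (m : ι) (t : ℝ) : MeasurableSet (T e f i j m t) :=
  (measurableSet_lt (measurable_pi_apply m) measurable_const).inter
    (A_meas e f i j _ (measurable_pi_apply m))

lemma T_val {e f : ℕ → ι} {i j E N : ℕ} (h : Q e f i j E N) (m : ι)
    (he : ∀ k, k < i → e k ≠ m) (hf : ∀ k, k < j → f k ≠ m) (t : ℝ) (h0 : 0 ≤ t) (h1 : t ≤ 1) :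
    P ι (T e f i j m t) = ENNReal.ofReal (E * t ^ (N + 1) / (N + 1).factorial) := by
  rw [P_fubini m _ (T_meas e f i j m t)]
  refine int_step E N t h0 h1 _ ?_ ?_
  · intro x hx hxt
    rw [← h x hx (hxt.le.trans h1)]
    congr 1
    ext ω
    have he' : ∀ k, k < i → Function.update ω m x (e k) = ω (e k) := fun k hk =>
      Function.update_of_ne (he k hk) _ _
    have hf' : ∀ k, k < j → Function.update ω m x (f k) = ω (f k) := fun k hk =>
      Function.update_of_ne (hf k hk) _ _
    simp only [T, A, Set.mem_setOf_eq, Set.mem_inter_iff, Function.update_self, hxt, true_and]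
    refine and_congr ?_ (and_congr ?_ (and_congr ?_ ?_))
    · refine forall_congr' fun k => forall_congr' fun l => forall_congr' fun hk => 
        forall_congr' fun hl => ?_
      rw [he' k (hk.trans hl), he' l hl]
    · refine forall_congr' fun k => forall_congr' fun l => forall_congr' fun hk => 
        forall_congr' fun hl => ?_
      rw [hf' k (hk.trans hl), hf' l hl]
    · exact forall_congr' fun k => forall_congr' fun hk => by rw [he' k hk]
    · exact forall_congr' fun k => forall_congr' fun hk => by rw [hf' k hk]
  · intro x hx
    have : {ω | Function.update ω m x ∈ T e f i j m t} = ∅ := by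
      ext ω
      simp [T, not_lt.2 hx]
    rw [this, measure_empty]

lemma Q_zero (e f : ℕ → ι) : Q e f 0 0 1 0 := by
  intro t h0 h1
  have : A e f 0 0 t = Set.univ := by ext; simp [A]
  rw [this]; simp

lemma Q_shared {e f : ℕ → ι} {p E N : ℕ} (h : Q e f p p E N) (hef : e p = f p)
    (he : ∀ k, k < p → e k ≠ e p) (hf : ∀ k, k < p → f k ≠ f p) :
    Q e f (p+1) (p+1) E (N+1) := by
  intro t h0 h1
  rw [← T_val h (e p) he (by rw [hef]; exact hf) t h0 h1]
  congr 1
  ext ω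
  simp only [A, T, Set.mem_setOf_eq, Set.mem_inter_iff]
  constructor
  · rintro ⟨a, b, c, d⟩
    refine ⟨c p (by omega), fun k l hk hl => a k l hk (by omega), fun k l hk hl => b k l hk (by omega),
      fun k hk => a k p hk (by omega), fun k hk => by rw [hef]; exact b k p hk (by omega)⟩
  · rintro ⟨x, a, b, c, d⟩
    refine ⟨fun k l hk hl => ?_, fun k l hk hl => ?_, fun k hk => ?_, fun k hk => ?_⟩
    · rcases Nat.lt_succ_iff_lt_or_eq.1 hl with h | rfl
      · exact a k l hk h
      · exact c k hk
    · rcases Nat.lt_succ_iff_lt_or_eq.1 hl with h | rfl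
      · exact b k l hk h
      · rw [← hef]; exact d k hk
    · rcases Nat.lt_succ_iff_lt_or_eq.1 hk with h | rfl
      · exact (c k h).trans x
      · exact x
    · rcases Nat.lt_succ_iff_lt_or_eq.1 hk with h | rfl
      · exact (d k h).trans x
      · rw [← hef]; exact x

lemma T_eq (e f : ℕ → ι) (i j : ℕ) (t : ℝ) :
    T e f i j (e i) t = A e f (i+1) j t ∩ {ω | ∀ k, k < j → ω (f k) < ω (e i)} := by
  ext ω
  simp only [A, T, Set.mem_setOf_eq, Set.mem_inter_iff]
  constructor
  · rintro ⟨x, a, b, c, d⟩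
    refine ⟨⟨fun k l hk hl => ?_, b, fun k hk => ?_, fun k hk => (d k hk).trans x⟩, d⟩
    · rcases Nat.lt_succ_iff_lt_or_eq.1 hl with h | rfl
      · exact a k l hk h
      · exact c k hk
    · rcases Nat.lt_succ_iff_lt_or_eq.1 hk with h | rfl
      · exact (c k h).trans x
      · exact x
  · rintro ⟨⟨a, b, c, d⟩, x⟩
    exact ⟨c i (by omega), fun k l hk hl => a k l hk (by omega), b,
      fun k hk => a k i hk (by omega), x⟩

lemma Q_edge {e f : ℕ → ι} {i p E N : ℕ} (h : Q e f i p E N) (hip : p ≤ i)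
    (hp : ∀ q, p = q + 1 → e q = f q)
    (he : ∀ k, k < i → e k ≠ e i) (hf : ∀ k, k < p → f k ≠ e i) :
    Q e f (i+1) p E (N+1) := by
  intro t h0 h1
  rw [← T_val h (e i) he hf t h0 h1, T_eq]
  congr 1
  symm
  rw [Set.inter_eq_left]
  rintro ω ⟨a, b, c, d⟩ k hk
  obtain ⟨q, rfl⟩ : ∃ q, p = q + 1 := ⟨p - 1, by omega⟩
  have h1 : ω (f q) < ω (e i) := by rw [← hp q rfl]; exact a q i (by omega) (by omega)
  rcases Nat.lt_succ_iff_lt_or_eq.1 hk with h | rfl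
  · exact (b k q h (by omega)).trans h1
  · exact h1

lemma Q_mid {e f : ℕ → ι} {i j E F N : ℕ} (h : Q e f i (j+1) E N) (h' : Q e f (i+1) j F N)
    (he : ∀ k, k < i → e k ≠ e i) (hf : ∀ k, k < j → f k ≠ f j)
    (hfe : ∀ k, k < j + 1 → f k ≠ e i) (hef : ∀ k, k < i + 1 → e k ≠ f j) :
    Q e f (i+1) (j+1) (E + F) (N+1) := by
  intro t h0 h1
  have H1 := T_val h (e i) he hfe t h0 h1
  have H2 := T_val (Q_swap h') (f j) hf hef t h0 h1
  have hd : Disjoint (T e f i (j+1) (e i) t) (T f e j (i+1) (f j) t) := by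
    rw [T_eq, T_eq, Set.disjoint_left]
    rintro ω ⟨_, x⟩ ⟨_, y⟩
    exact lt_asymm (x j (by omega)) (y i (by omega))
  have hU : A e f (i+1) (j+1) t =ᵐ[P ι] (T e f i (j+1) (e i) t ∪ T f e j (i+1) (f j) t : Set _) := by
    have : ∀ᵐ ω ∂(P ι), ω (e i) ≠ ω (f j) := by
      rw [ae_iff]; simpa using P_tie (hef i (by omega))
    filter_upwards [this] with ω hω
    apply propext
    show ω ∈ A e f (i+1) (j+1) t ↔ ω ∈ T e f i (j+1) (e i) t ∪ T f e j (i+1) (f j) t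
    rw [T_eq, T_eq, A_swap f e]
    constructor
    · intro hA
      obtain ⟨a, b, c, d⟩ := id hA
      rcases lt_or_gt_of_ne hω with hlt | hlt
      · refine Or.inr ⟨hA, fun k hk => ?_⟩
        rcases Nat.lt_succ_iff_lt_or_eq.1 hk with h | rfl
        · exact (a k i h (by omega)).trans hlt
        · exact hlt
      · refine Or.inl ⟨hA, fun k hk => ?_⟩
        rcases Nat.lt_succ_iff_lt_or_eq.1 hk with h | rfl
        · exact (b k j h (by omega)).trans hlt
        · exact hlt
    · rintro (h | h) <;> exact h.1
  rw [measure_congr hU, measure_union hd (T_meas _ _ _ _ _ _), H1, H2,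
    ← ENNReal.ofReal_add (by positivity) (by positivity)]
  congr 1
  push_cast
  ring

lemma Q_gap {e f : ℕ → ι} {n : ℕ} (he : ∀ i j, i < n → j < n → e i = e j → i = j)
    (hf : ∀ i j, i < n → j < n → f i = f j → i = j)
    (hef : ∀ i j, i < n → j < n → e i = f j → i = j)
    {p q E N : ℕ} (hq : q ≤ n) (hp : ∀ r, p = r + 1 → e r = f r)
    (hns : ∀ k, p ≤ k → k < q → e k ≠ f k) (h : Q e f p p E N) :
    ∀ i j, p + i ≤ q → p + j ≤ q → Q e f (p+i) (p+j) (E * (i+j).choose i) (N + i + j) := by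
  have he' : ∀ i k, i < q → k < i → e k ≠ e i := fun i k hi hk hh => by
    have := he k i (by omega) (by omega) hh; omega
  have hf' : ∀ i k, i < q → k < i → f k ≠ f i := fun i k hi hk hh => by
    have := hf k i (by omega) (by omega) hh; omega
  have hef' : ∀ i k, p ≤ i → i < q → k < q → e k ≠ f i := fun i k hi hi' hk hh => by
    have := hef k i (by omega) (by omega) hh; subst this; exact hns k hi hi' hh
  have hfe' : ∀ i k, p ≤ i → i < q → k < q → f k ≠ e i := fun i k hi hi' hk hh => by
    have := hef i k (by omega) (by omega) hh.symm; subst this; exact hns i hi hi' hh.symm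
  intro i
  induction i with
  | zero =>
    intro j
    induction j with
    | zero => intro _ _; simpa using h
    | succ j ih =>
      intro hi hj
      have := ih hi (by omega)
      have := Q_swap (Q_edge (Q_swap this) (by omega) (fun r hr => (hp r hr).symm)
        (fun k hk => hf' _ _ (by omega) hk) (fun k hk => hef' _ _ (by omega) (by omega) (by omega)))
      simpa [add_assoc] using this
  | succ i ih =>
    intro j
    induction j with
    | zero =>
      intro hi hj
      have := ih 0 (by omega) hj
      have := (Q_edge this (by omega) hp
        (fun k hk => he' _ _ (by omega) hk) (fun k hk => hfe' _ _ (by omega) (by omega) (by omega)))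
      simpa [add_assoc] using this
    | succ j ihj =>
      intro hi hj
      have a := ih (j+1) (by omega) hj
      have b := ihj hi (by omega)
      have e1 : N + i + (j + 1) = N + (i + 1) + j := by omega
      rw [e1] at a
      have := Q_mid (i := p + i) (j := p + j) a b (fun k hk => he' _ _ (by omega) hk)
        (fun k hk => hf' _ _ (by omega) hk) (fun k hk => hfe' _ _ (by omega) (by omega) (by omega))
        (fun k hk => hef' _ _ (by omega) (by omega) (by omega))
      have e2 : E * (i + 1 + (j + 1)).choose (i + 1)
          = E * (i + (j + 1)).choose i + E * (i + 1 + j).choose (i + 1) := by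
        have : i + 1 + (j + 1) = (i + (j + 1)) + 1 := by omega
        rw [this, Nat.choose_succ_succ, mul_add]
        congr 3
        omega
      rw [e2]
      exact this

def gaps (n p : ℕ) (l : List ℕ) : List ℕ :=
  List.zipWith (fun a b => b - a) (p :: l.map (· + 1)) (l ++ [n])

lemma Q_list {e f : ℕ → ι} {n : ℕ} (he : ∀ i j, i < n → j < n → e i = e j → i = j)
    (hf : ∀ i j, i < n → j < n → f i = f j → i = j)
    (hef : ∀ i j, i < n → j < n → e i = f j → i = j) (l : List ℕ) :
    ∀ (p E N M : ℕ), p ≤ n → (∀ r, p = r + 1 → e r = f r) → l.Pairwise (· < ·) →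
      (∀ x ∈ l, p ≤ x ∧ x < n ) → (∀ k, p ≤ k → k < n → (e k = f k ↔ k ∈ l)) →
      Q e f p p E N → M + l.length = N + 2 * (n - p) →
      Q e f n n (E * ((gaps n p l).map fun a => (2 * a).choose a).prod) M := by
  induction l with
  | nil =>
    intro p E N M hpn hp _ _ hsh h hM
    have := Q_gap he hf hef le_rfl hp (fun k hk hk' hh => by simpa using (hsh k hk hk').1 hh) h
      (n - p) (n - p) (by omega) (by omega)
    have e1 : p + (n - p) = n := by omega
    have e2 : N + (n - p) + (n - p) = M := by simp at hM; omega
    rw [e1, e2, ← two_mul] at this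
    simpa [gaps] using this
  | cons x l ih =>
    intro p E N M hpn hp hs hl hsh h hM
    rw [List.pairwise_cons] at hs
    have hx := hl x (by simp)
    have h1 := Q_gap he hf hef hx.2.le hp (fun k hk hk' hh => by
      rcases List.mem_cons.1 ((hsh k hk (by omega)).1 hh) with h | h
      · omega
      · have := hs.1 k h; omega) h
      (x - p) (x - p) (by omega) (by omega)
    have e1 : p + (x - p) = x := by omega
    rw [e1, ← two_mul] at h1
    have hxs : e x = f x := (hsh x hx.1 hx.2).2 (by simp)
    have h2 := Q_shared h1 hxs
      (fun k hk hh => by have := he k x (by omega) (by omega) hh; omega)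
      (fun k hk hh => by have := hf k x (by omega) (by omega) hh; omega)
    have h3 := ih (x+1) _ _ M (by omega) (fun r hr => by
        have : x = r := by omega
        subst this; exact hxs) hs.2
      (fun y hy => ⟨hs.1 y hy, (hl y (by simp [hy])).2⟩)
      (fun k hk hk' => by
        rw [hsh k (by omega) hk', List.mem_cons]
        constructor
        · rintro (h | h)
          · omega
          · exact h
        · exact Or.inr) h2 (by simp at hM; omega)
    have e3 : gaps n p (x :: l) = (x - p) :: gaps n (x+1) l := by simp [gaps]
    rw [e3, List.map_cons, List.prod_cons, ← mul_assoc]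
    exact h3

end

lemma initSeg_card (n : ℕ) (σ : Equiv.Perm (Fin n)) (j : Fin n) : (initSeg n σ j).card = j := by
  rw [initSeg, Finset.card_image_of_injective _ σ.injective]
  have : (Finset.univ.filter fun i : Fin n => i < j) = Finset.Iio j := by ext; simp
  rw [this, Fin.card_Iio]

lemma pathEdge_inj {n : ℕ} {σ τ : Equiv.Perm (Fin n)} {i j : Fin n}
    (h : pathEdge n σ i = pathEdge n τ j) : i = j := by
  have h1 : initSeg n σ i = initSeg n τ j := congrArg Prod.fst h
  have := congrArg Finset.card h1
  rw [initSeg_card, initSeg_card] at this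
  exact Fin.ext this

end Aux
end RandomHypercube

open RandomHypercube in
/-- If the direct path of `σ` shares exactly `s` edges with the canonical path
(the identity permutation) and has gap vector `a = (a_0, …, a_s)` relative to it, then
the probability that both paths are accessible is `(∏ i, C(2 a_i, a_i)) / (2n - s)!`. -/
theorem prob_both_accessible (n : ℕ) (hn : 1 ≤ n) (σ : Equiv.Perm (Fin n))
    (s : ℕ) (hs : s = (sharedSteps n σ 1).card)
    (a : List ℕ) (ha : a = gapVector n σ 1) :
    cubeMeasure n {ω | Accessible n σ ω ∧ Accessible n 1 ω}
      = ((a.map fun ai => ((2 * ai).choose ai : ℝ≥0∞)).prod)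
        / ((2 * n - s).factorial : ℝ≥0∞) := by
  classical
  let E : Equiv.Perm (Fin n) → ℕ → EdgeIdx n := fun τ k =>
    pathEdge n τ (if h : k < n then ⟨k, h⟩ else ⟨0, hn⟩)
  have hE : ∀ τ k (h : k < n), E τ k = pathEdge n τ ⟨k, h⟩ := fun τ k h => by simp [E, h]
  have hinj : ∀ τ τ' i j, i < n → j < n → E τ i = E τ' j → i = j := by
    intro τ τ' i j hi hj h
    rw [hE τ i hi, hE τ' j hj] at h
    simpa using Aux.pathEdge_inj h
  have hcard : s ≤ n := by
    rw [hs]; simpa using Finset.card_le_univ (sharedSteps n σ 1)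
  have key := Aux.Q_list (e := E σ) (f := E 1) (n := n) (hinj _ _) (hinj _ _) (hinj _ _)
    (((sharedSteps n σ 1).sort (· ≤ ·)).map Fin.val) 0 1 0 (2 * n - s) (by omega)
    (fun r hr => by omega)
    (by
      rw [List.pairwise_map]
      exact ((sharedSteps n σ 1).sortedLT_sort).pairwise)
    (by
      intro x hx
      obtain ⟨y, _, rfl⟩ := List.mem_map.1 hx
      exact ⟨by omega, y.2⟩)
    (by
      intro k _ hk
      rw [hE _ k hk, hE _ k hk]
      simp only [List.mem_map, Finset.mem_sort, sharedSteps, Finset.mem_filter, Finset.mem_univ,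
        true_and]
      constructor
      · intro h; exact ⟨⟨k, hk⟩, h, rfl⟩
      · rintro ⟨y, hy, rfl⟩; exact hy)
    (Aux.Q_zero _ _) (by simp [← hs]; omega) 1 zero_le_one le_rfl
  have hset : ({ω | Accessible n σ ω ∧ Accessible n 1 ω} : Set (CubeOmega n))
      =ᵐ[Aux.P (EdgeIdx n)] Aux.A (E σ) (E 1) n n 1 := by
    have hacc : ∀ τ (ω : CubeOmega n), Accessible n τ ω ↔
        ∀ k l, k < l → l < n → ω (E τ k) < ω (E τ l) := by
      intro τ ω
      constructor
      · intro h k l hk hl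
        rw [hE _ k (hk.trans hl), hE _ l hl]
        exact h (show (⟨k, hk.trans hl⟩ : Fin n) < ⟨l, hl⟩ from hk)
      · intro h k l hkl
        have := h k l hkl l.2
        rwa [hE _ _ k.2, hE _ _ l.2] at this
    filter_upwards [Aux.ae_lt_one (ι := EdgeIdx n)] with ω hω
    apply propext
    show (Accessible n σ ω ∧ Accessible n 1 ω) ↔ ω ∈ Aux.A (E σ) (E 1) n n 1
    rw [hacc, hacc]
    constructor
    · rintro ⟨x, y⟩
      exact ⟨x, y, fun k _ => hω _, fun k _ => hω _⟩
    · rintro ⟨x, y, _⟩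
      exact ⟨x, y⟩
  have hP : cubeMeasure n = Aux.P (EdgeIdx n) := rfl
  have hg : Aux.gaps n 0 (((sharedSteps n σ 1).sort (· ≤ ·)).map Fin.val) = a := by
    rw [ha]; rfl
  rw [hP, measure_congr hset, key, hg, one_pow, mul_one, one_mul,
    ENNReal.ofReal_div_of_pos (by positivity), ENNReal.ofReal_natCast, ENNReal.ofReal_natCast]
  congr 1
  rw [Nat.cast_list_prod, List.map_map]
  rfl
end
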